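/- If J_B is a connected component of F_B and J_W is a connected component of F_W, then exactly one of the following three possibilities holds: J_B ∩ J_W = ∅, or J_B ⊆ J_W, or J_W ⊆ J_B. -/

import Mathlib

open MeasureTheory Set Filter

/-- The relative measure of `H` in the interval `(p - ω, p + ω)`,
i.e. `λ(H | I_ω(p)) = λ(H ∩ I_ω(p)) / (2ω)`. -/
noncomputable def relMeasure (H : Set ℝ) (p ω : ℝ) : ℝ :=
  (volume (H ∩ Ioo (p - ω) (p + ω))).toReal / (2 * ω)

/-- A configuration: a finite increasing sequence `0 < a 0 < b 0 < a 1 < ⋯ < a (r-1) < b (r-1)`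
of positive reals. -/
structure Config where
  r : ℕ
  hr : 0 < r
  a : Fin r → ℝ
  b : Fin r → ℝ
  ha : ∀ i, 0 < a i
  hab : ∀ i, a i < b i
  hba : ∀ i j : Fin r, i < j → b i < a j

/-- The set `C = (-∞,0) ∪ ⋃ i (a i, b i)` associated to a configuration. -/
def Config.carrier (C : Config) : Set ℝ := Iio 0 ∪ ⋃ i, Ioo (C.a i) (C.b i)

/-- The endpoints of a configuration: `0` together with all the `a i` and `b i`. -/
def Config.endpoints (C : Config) : Set ℝ := insert 0 (range C.a ∪ range C.b)

/-- `C` is a counterexample to `K(δ)`: every endpoint `c` of `C` admits a radius `ω > 0`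
with `λ(C | I_ω(c)) ∉ [δ, 1-δ]`. -/
def IsCounterexample (δ : ℝ) (C : Config) : Prop :=
  ∀ c ∈ C.endpoints, ∃ ω > 0, relMeasure C.carrier c ω ∉ Icc δ (1 - δ)

/-- `ω(p) = sup {ω ≥ 0 : λ(C | I_ω(p)) ∉ (δ, 1-δ)}`. -/
noncomputable def omegaMax (C : Config) (δ p : ℝ) : ℝ :=
  sSup {ω : ℝ | 0 ≤ ω ∧ relMeasure C.carrier p ω ∉ Ioo δ (1 - δ)}

/-- An endpoint `p` is black if `λ(C | I_{ω(p)}(p)) ≥ 1 - δ`. -/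
def IsBlack (C : Config) (δ p : ℝ) : Prop :=
  p ∈ C.endpoints ∧ 1 - δ ≤ relMeasure C.carrier p (omegaMax C δ p)

/-- An endpoint `p` is white if `λ(C | I_{ω(p)}(p)) ≤ δ`. -/
def IsWhite (C : Config) (δ p : ℝ) : Prop :=
  p ∈ C.endpoints ∧ relMeasure C.carrier p (omegaMax C δ p) ≤ δ

/-- The set `F` of endpoints of `C` lying strictly between `v_B` and `v_W`. -/
def Fpts (C : Config) (vB vW : ℝ) : Set ℝ := {v | v ∈ C.endpoints ∧ vB < v ∧ v < vW}

/-- `F_B1 = ⋃ {I_{μ(p)}(p) : p ∈ F black}`. -/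
def FB1 (C : Config) (δ : ℝ) (μ : ℝ → ℝ) (vB vW : ℝ) : Set ℝ :=
  ⋃ p ∈ {q : ℝ | q ∈ Fpts C vB vW ∧ IsBlack C δ q}, Ioo (p - μ p) (p + μ p)

/-- `F_W1 = ⋃ {I_{μ(p)}(p) : p ∈ F white}`. -/
def FW1 (C : Config) (δ : ℝ) (μ : ℝ → ℝ) (vB vW : ℝ) : Set ℝ :=
  ⋃ p ∈ {q : ℝ | q ∈ Fpts C vB vW ∧ IsWhite C δ q}, Ioo (p - μ p) (p + μ p)

/-- `F_B2 = ⋃ {(a i, b i) : F_B1 ∩ (a i, b i) ≠ ∅}`. -/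
def FB2 (C : Config) (δ : ℝ) (μ : ℝ → ℝ) (vB vW : ℝ) : Set ℝ :=
  ⋃ i ∈ {i : Fin C.r | (FB1 C δ μ vB vW ∩ Ioo (C.a i) (C.b i)).Nonempty},
    Ioo (C.a i) (C.b i)

/-- `F_W2 = ⋃ {(b i, a (i+1)) : F_W1 ∩ (b i, a (i+1)) ≠ ∅}`. -/
def FW2 (C : Config) (δ : ℝ) (μ : ℝ → ℝ) (vB vW : ℝ) : Set ℝ :=
  ⋃ (i : ℕ) (h : i + 1 < C.r)
    (_ : (FW1 C δ μ vB vW ∩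
      Ioo (C.b ⟨i, Nat.lt_of_succ_lt h⟩) (C.a ⟨i + 1, h⟩)).Nonempty),
      Ioo (C.b ⟨i, Nat.lt_of_succ_lt h⟩) (C.a ⟨i + 1, h⟩)

/-- `F_B = F_B1 ∪ F_B2`. -/
def FB (C : Config) (δ : ℝ) (μ : ℝ → ℝ) (vB vW : ℝ) : Set ℝ :=
  FB1 C δ μ vB vW ∪ FB2 C δ μ vB vW

/-- `F_W = F_W1 ∪ F_W2`. -/
def FW (C : Config) (δ : ℝ) (μ : ℝ → ℝ) (vB vW : ℝ) : Set ℝ :=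
  FW1 C δ μ vB vW ∪ FW2 C δ μ vB vW

/-!
Suppose that a component `(s, t)` of `F_B` and a component of `F_W` overlap without being nested.
Cutting the configuration down to the overlap, after a reflection or a passage to the complement
if necessary, leaves an alternating system with fewer cells. All its endpoints are still
unbalanced: an endpoint is witnessed by an interval that lies in the component covering it, and if
this interval sticks out of the overlap, it can be shifted or shrunk inside it at no loss of
density. This contradicts minimality.

The half-lines at infinity are the reason for `v_B` and `v_W`: an endpoint outside `(v_B, v_W)` may
be witnessed by an interval reaching out of `[0, 1]`, and merging the cells to the left of such an
endpoint with the half-line would again give a smaller counterexample.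

On the cumulative mass function `x ↦ λ(C ∩ (0, x])`, the passage to the reflected complement, which
interchanges black and white, becomes the involution `G ↦ (x ↦ x + G (-x))`.
-/

/-! ### Mass functions -/

/-- `G` is affine with slope `c` on `I`. -/
def HasSlopeOn (G : ℝ → ℝ) (c : ℝ) (I : Set ℝ) : Prop :=
  ∀ x ∈ I, ∀ y ∈ I, G y - G x = c * (y - x)

/-- `G` behaves like a cumulative mass function `x ↦ λ(H ∩ (a, x])` of a measurable set `H`. -/
structure IsMassFunction (G : ℝ → ℝ) : Prop where
  mono : Monotone G
  sub_le : ∀ ⦃x y⦄, x ≤ y → G y - G x ≤ y - x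

/-- The mass that a mass function assigns to the interval of radius `ω` about `x`. -/
def ballMass (G : ℝ → ℝ) (x ω : ℝ) : ℝ := G (x + ω) - G (x - ω)

/-- The mass function of the complement of the reflected set `-H`. It exchanges black and white
and keeps the black half-line at `-∞`. -/
def dual (G : ℝ → ℝ) (x : ℝ) : ℝ := x + G (-x)

/-- The mass function of the reflected set `-H`. -/
def reverse (G : ℝ → ℝ) (x : ℝ) : ℝ := -G (-x)

/-- Some interval about `x` has density outside `[δ, 1 - δ]`. -/
def IsUnbalanced (δ : ℝ) (G : ℝ → ℝ) (x : ℝ) : Prop :=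
  ∃ ω > 0, ballMass G x ω < 2 * δ * ω ∨ 2 * (1 - δ) * ω < ballMass G x ω

/-- The interval of radius `ρ` about `x` has density at least `1 - δ`, and the largest density
among all intervals about `x`. -/
structure IsBlackRadius (δ : ℝ) (G : ℝ → ℝ) (x ρ : ℝ) : Prop where
  pos : 0 < ρ
  le_ballMass : 2 * (1 - δ) * ρ ≤ ballMass G x ρ
  extremal : ∀ ω > 0, ballMass G x ω * ρ ≤ ballMass G x ρ * ω

/-- The interval of radius `ρ` about `x` has density at most `δ`, and the smallest density
among all intervals about `x`. -/
structure IsWhiteRadius (δ : ℝ) (G : ℝ → ℝ) (x ρ : ℝ) : Prop where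
  pos : 0 < ρ
  ballMass_le : ballMass G x ρ ≤ 2 * δ * ρ
  extremal : ∀ ω > 0, ballMass G x ρ * ω ≤ ballMass G x ω * ρ

/-- A radius `ρ` showing that `x` is unbalanced by black mass, in a way that survives blackening
everything to the left of a point `u ≤ x`: in case of equality, either the blackening makes the
density exceed `1 - δ`, or it does not reach the smaller radius `ω`. -/
def IsBlackWitness (δ : ℝ) (G : ℝ → ℝ) (x ρ : ℝ) : Prop :=
  0 < ρ ∧ (2 * (1 - δ) * ρ < ballMass G x ρ ∨
    (2 * (1 - δ) * ρ ≤ ballMass G x ρ ∧ ∃ ω > 0, ω < ρ ∧ ballMass G x ω < 2 * δ * ω))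

/-- The notion dual to `IsBlackWitness`. -/
def IsWhiteWitness (δ : ℝ) (G : ℝ → ℝ) (x ρ : ℝ) : Prop :=
  0 < ρ ∧ (ballMass G x ρ < 2 * δ * ρ ∨
    (ballMass G x ρ ≤ 2 * δ * ρ ∧ ∃ ω > 0, ω < ρ ∧ 2 * (1 - δ) * ω < ballMass G x ω))

section MassFunction

variable {δ c x y u t p ρ : ℝ} {G G' : ℝ → ℝ} {I J : Set ℝ}

theorem HasSlopeOn.mono (h : HasSlopeOn G c I) (hJ : J ⊆ I) : HasSlopeOn G c J :=
  fun x hx y hy => h x (hJ hx) y (hJ hy)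

theorem HasSlopeOn.congr (h : HasSlopeOn G c I) (hG : ∀ x ∈ I, ∀ y ∈ I, G' y - G' x = G y - G x) :
    HasSlopeOn G' c I :=
  fun x hx y hy => (hG x hx y hy).trans (h x hx y hy)

theorem HasSlopeOn.dual (h : HasSlopeOn G c (Icc x y)) :
    HasSlopeOn (dual G) (1 - c) (Icc (-y) (-x)) := by
  intro a ha b hb
  have := h (-b) ⟨by linarith [hb.2], by linarith [hb.1]⟩
    (-a) ⟨by linarith [ha.2], by linarith [ha.1]⟩
  simp only [_root_.dual]
  linarith

theorem HasSlopeOn.reverse (h : HasSlopeOn G c (Icc x y)) :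
    HasSlopeOn (reverse G) c (Icc (-y) (-x)) := by
  intro a ha b hb
  have := h (-b) ⟨by linarith [hb.2], by linarith [hb.1]⟩
    (-a) ⟨by linarith [ha.2], by linarith [ha.1]⟩
  simp only [_root_.reverse]
  linarith

theorem dual_dual (G : ℝ → ℝ) : dual (dual G) = G := by
  funext x
  simp [dual]

theorem ballMass_dual_neg (G : ℝ → ℝ) (x ω : ℝ) :
    ballMass (dual G) (-x) ω = 2 * ω - ballMass G x ω := by
  simp only [ballMass, dual, neg_add_rev, neg_sub, neg_neg, sub_neg_eq_add]
  ring_nf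

theorem ballMass_reverse_neg (G : ℝ → ℝ) (x ω : ℝ) :
    ballMass (reverse G) (-x) ω = ballMass G x ω := by
  simp only [ballMass, reverse, neg_add_rev, neg_sub, neg_neg, sub_neg_eq_add]
  ring_nf

theorem isUnbalanced_dual_neg : IsUnbalanced δ (dual G) (-x) ↔ IsUnbalanced δ G x := by
  refine exists_congr fun ω => and_congr_right fun _ => ?_
  rw [ballMass_dual_neg, or_comm]
  refine or_congr ⟨fun h => ?_, fun h => ?_⟩ ⟨fun h => ?_, fun h => ?_⟩ <;> linarith

theorem isBlackRadius_dual_neg : IsBlackRadius δ (dual G) (-x) ρ ↔ IsWhiteRadius δ G x ρ := by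
  constructor
  · rintro ⟨hρ, h, hext⟩
    simp only [ballMass_dual_neg] at h hext
    exact ⟨hρ, by linarith, fun ω hω => by linarith [hext ω hω]⟩
  · rintro ⟨hρ, h, hext⟩
    refine ⟨hρ, ?_, fun ω hω => ?_⟩ <;> simp only [ballMass_dual_neg]
    · linarith
    · linarith [hext ω hω]

theorem isWhiteRadius_dual_neg : IsWhiteRadius δ (dual G) (-x) ρ ↔ IsBlackRadius δ G x ρ := by
  rw [← isBlackRadius_dual_neg, dual_dual, neg_neg]

theorem isBlackWitness_dual_neg : IsBlackWitness δ (dual G) (-x) ρ ↔ IsWhiteWitness δ G x ρ := by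
  simp only [IsBlackWitness, IsWhiteWitness, ballMass_dual_neg]
  refine and_congr_right fun _ => or_congr ⟨fun h => ?_, fun h => ?_⟩ (and_congr
    ⟨fun h => ?_, fun h => ?_⟩ (exists_congr fun ω => and_congr_right fun _ =>
      and_congr_right fun _ => ⟨fun h => ?_, fun h => ?_⟩)) <;> linarith

theorem isWhiteWitness_dual_neg : IsWhiteWitness δ (dual G) (-x) ρ ↔ IsBlackWitness δ G x ρ := by
  rw [← isBlackWitness_dual_neg, dual_dual, neg_neg]

theorem isBlackRadius_reverse_neg :
    IsBlackRadius δ (reverse G) (-x) ρ ↔ IsBlackRadius δ G x ρ := by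
  constructor <;> rintro ⟨hρ, h, hext⟩ <;>
    exact ⟨hρ, by simpa only [ballMass_reverse_neg] using h,
      by simpa only [ballMass_reverse_neg] using hext⟩

theorem isWhiteRadius_reverse_neg :
    IsWhiteRadius δ (reverse G) (-x) ρ ↔ IsWhiteRadius δ G x ρ := by
  constructor <;> rintro ⟨hρ, h, hext⟩ <;>
    exact ⟨hρ, by simpa only [ballMass_reverse_neg] using h,
      by simpa only [ballMass_reverse_neg] using hext⟩

theorem isBlackWitness_reverse_neg :
    IsBlackWitness δ (reverse G) (-x) ρ ↔ IsBlackWitness δ G x ρ := by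
  simp only [IsBlackWitness, ballMass_reverse_neg]

theorem isWhiteWitness_reverse_neg :
    IsWhiteWitness δ (reverse G) (-x) ρ ↔ IsWhiteWitness δ G x ρ := by
  simp only [IsWhiteWitness, ballMass_reverse_neg]

theorem IsMassFunction.dual (hG : IsMassFunction G) : IsMassFunction (dual G) where
  mono x y hxy := by
    have := hG.sub_le (neg_le_neg hxy)
    simp only [_root_.dual]
    linarith
  sub_le x y hxy := by
    have := hG.mono (neg_le_neg hxy)
    simp only [_root_.dual]
    linarith

theorem IsMassFunction.reverse (hG : IsMassFunction G) : IsMassFunction (reverse G) where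
  mono x y hxy := neg_le_neg (hG.mono (neg_le_neg hxy))
  sub_le x y hxy := by
    have := hG.sub_le (neg_le_neg hxy)
    simp only [_root_.reverse]
    linarith

theorem IsMassFunction.continuous (hG : IsMassFunction G) : Continuous G :=
  (LipschitzWith.of_le_add fun x y => by
    rcases le_total x y with h | h
    · linarith [hG.mono h, dist_nonneg (x := x) (y := y)]
    · linarith [hG.sub_le h, Real.dist_eq x y, le_abs_self (x - y)]).continuous

/-! ### Extremal radii -/

/- The interval loses density when it shrinks, so the two flanks it loses have density at least
`1 - δ` together, hence at least `1 - 2δ` each. -/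
theorem IsBlackRadius.mul_le_sub_apply (hG : IsMassFunction G) (hδ : 0 ≤ δ)
    (h : IsBlackRadius δ G p ρ) (hx : x ∈ Ioo (p - ρ) (p + ρ)) :
    (1 - 2 * δ) * (p + ρ - x) ≤ G (p + ρ) - G x := by
  obtain ⟨hρ, hmass, hext⟩ := h
  rcases le_or_gt x p with hxp | hxp
  · have hleft := hG.sub_le hx.1.le
    simp only [ballMass] at hmass
    nlinarith
  · have hshrink := hext (x - p) (by linarith)
    have hleft := hG.sub_le (x := p - ρ) (y := p - (x - p)) (by linarith [hx.2])
    have hflanks : 2 * (1 - δ) * (ρ - (x - p)) ≤ ballMass G p ρ - ballMass G p (x - p) := by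
      have hw : 0 < ρ - (x - p) := by linarith [hx.2]
      refine le_of_mul_le_mul_right ?_ hρ
      nlinarith
    simp only [ballMass, add_sub_cancel] at hflanks
    linarith

theorem IsBlackRadius.apply_lt_right (hG : IsMassFunction G) (hδ : 0 ≤ δ) (hδ2 : δ < 1 / 2)
    (h : IsBlackRadius δ G p ρ) (hx : x < p + ρ) : G x < G (p + ρ) := by
  have hρ := h.pos
  have hy : max x p ∈ Ioo (p - ρ) (p + ρ) :=
    ⟨lt_max_of_lt_right (by linarith), max_lt hx (by linarith)⟩
  have := h.mul_le_sub_apply hG hδ hy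
  have : 0 < (1 - 2 * δ) * (p + ρ - max x p) := mul_pos (by linarith) (by linarith [hy.2])
  linarith [hG.mono (le_max_left x p)]

theorem IsBlackRadius.apply_left_lt (hG : IsMassFunction G) (hδ : 0 ≤ δ) (hδ2 : δ < 1 / 2)
    (h : IsBlackRadius δ G p ρ) (hx : p - ρ < x) : G (p - ρ) < G x := by
  have := (isBlackRadius_reverse_neg.2 h).apply_lt_right hG.reverse hδ hδ2
    (x := -x) (by linarith)
  simp only [reverse, neg_neg, neg_add_rev] at this
  rw [show -ρ + p = p - ρ by ring] at this
  linarith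

/-! ### Truncating a mass function -/

/-- The mass function of the set made black to the left of `u` and white to the right of `t`. -/
def truncate (G : ℝ → ℝ) (u t x : ℝ) : ℝ := G (max u (min x t)) + min (x - u) 0

theorem truncate_of_le_left (hut : u ≤ t) (hx : x ≤ u) : truncate G u t x = G u - (u - x) := by
  rw [truncate, min_eq_left (hx.trans hut), max_eq_left hx, min_eq_left (by linarith)]
  ring

theorem truncate_of_mem (hx : x ∈ Icc u t) : truncate G u t x = G x := by
  rw [truncate, min_eq_left hx.2, max_eq_right hx.1, min_eq_right (by linarith [hx.1]), add_zero]

theorem truncate_of_right_le (hut : u ≤ t) (hx : t ≤ x) : truncate G u t x = G t := by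
  rw [truncate, min_eq_right hx, max_eq_right hut, min_eq_right (by linarith), add_zero]

theorem dual_truncate (hut : u ≤ t) : dual (truncate G u t) = truncate (dual G) (-t) (-u) := by
  funext x
  rcases le_total x (-t) with h | h
  · rw [truncate_of_le_left (by linarith) h, dual, truncate_of_right_le hut (by linarith), dual,
      neg_neg]
    ring
  rcases le_total x (-u) with h' | h'
  · rw [truncate_of_mem ⟨h, h'⟩, dual, truncate_of_mem ⟨by linarith, by linarith⟩, dual]
  · rw [truncate_of_right_le (by linarith) h', dual, truncate_of_le_left hut (by linarith), dual,
      neg_neg]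
    ring

theorem truncate_le (hG : IsMassFunction G) (hut : u ≤ t) (hx : x ≤ t) :
    truncate G u t x ≤ G x := by
  rcases le_total x u with h | h
  · rw [truncate_of_le_left hut h]
    linarith [hG.sub_le h]
  · rw [truncate_of_mem ⟨h, hx⟩]

theorem IsBlackWitness.isUnbalanced_truncate (hG : IsMassFunction G) (hux : u ≤ x)
    (h : IsBlackWitness δ G x ρ) (hxt : x + ρ ≤ t) : IsUnbalanced δ (truncate G u t) x := by
  obtain ⟨hρ, h⟩ := h
  have hut : u ≤ t := by linarith
  have hright : truncate G u t (x + ρ) = G (x + ρ) := truncate_of_mem ⟨by linarith, hxt⟩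
  have hleft : truncate G u t (x - ρ) ≤ G (x - ρ) := truncate_le hG hut (by linarith)
  by_cases hstrict : 2 * (1 - δ) * ρ < ballMass (truncate G u t) x ρ
  · exact ⟨ρ, hρ, Or.inr hstrict⟩
  simp only [ballMass, hright] at hstrict h
  obtain ⟨hweak, ω, hω, hωρ, hwhite⟩ := h.resolve_left (by linarith)
  refine ⟨ω, hω, Or.inl ?_⟩
  have hright' : truncate G u t (x + ω) = G (x + ω) :=
    truncate_of_mem ⟨by linarith, by linarith⟩
  have hleft' : truncate G u t (x - ω) = G (x - ω) := by
    rcases le_total u (x - ω) with h' | h'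
    · exact truncate_of_mem ⟨h', by linarith⟩
    · rw [truncate_of_le_left hut h']
      rw [truncate_of_le_left hut (by linarith)] at hleft hstrict
      linarith [hG.sub_le h', hG.sub_le (show x - ρ ≤ x - ω by linarith)]
  rwa [ballMass, hright', hleft']

theorem IsWhiteWitness.isUnbalanced_truncate (hG : IsMassFunction G) (hxt : x ≤ t)
    (h : IsWhiteWitness δ G x ρ) (hux : u ≤ x - ρ) : IsUnbalanced δ (truncate G u t) x := by
  rw [← isUnbalanced_dual_neg, dual_truncate (by linarith [h.1])]
  exact (isBlackWitness_dual_neg.2 h).isUnbalanced_truncate hG.dual (by linarith) (by linarith)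

/- The interval with the same right end as the black interval of `p`, but centred at `x < p`,
only gains black mass. -/
theorem IsBlackRadius.isUnbalanced_truncate (hG : IsMassFunction G) (hδ : 0 < δ)
    (h : IsBlackRadius δ G p ρ) (hux : u ≤ x) (hxp : x < p) (hpu : p - ρ < u) (hpt : p + ρ ≤ t) :
    IsUnbalanced δ (truncate G u t) x := by
  have := h.pos
  have hmass := h.le_ballMass
  refine ⟨p + ρ - x, by linarith, Or.inr ?_⟩
  rw [ballMass, add_sub_cancel, truncate_of_mem ⟨by linarith, hpt⟩,
    truncate_of_le_left (by linarith) (by linarith)]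
  have := hG.sub_le hpu.le
  simp only [ballMass] at hmass
  nlinarith [mul_pos hδ (sub_pos.2 hxp)]

theorem IsWhiteRadius.isUnbalanced_truncate (hG : IsMassFunction G) (hδ : 0 < δ)
    (h : IsWhiteRadius δ G p ρ) (hxt : x ≤ t) (hpx : p < x) (hpt : t < p + ρ) (hpu : u ≤ p - ρ) :
    IsUnbalanced δ (truncate G u t) x := by
  rw [← isUnbalanced_dual_neg, dual_truncate (by linarith [h.pos])]
  exact (isBlackRadius_dual_neg.2 h).isUnbalanced_truncate hG.dual hδ (by linarith) (by linarith)
    (by linarith) (by linarith)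

end MassFunction

/-! ### Alternating profiles -/

section Cells

variable {α : Type*} [LinearOrder α] (e : ℕ → α) {x y : α} {m : ℕ}

theorem exists_mem_Ioc_map_succ (h0 : e 0 < x) (hm : x ≤ e m) :
    ∃ i < m, x ∈ Ioc (e i) (e (i + 1)) := by
  classical
  have hx : ∃ j, x ≤ e j := ⟨m, hm⟩
  obtain ⟨i, hi⟩ := Nat.exists_eq_add_one_of_ne_zero (n := Nat.find hx) fun h =>
    h0.not_ge (h ▸ Nat.find_spec hx)
  exact ⟨i, by have := Nat.find_min' hx hm; omega,
    not_le.1 (Nat.find_min hx (hi ▸ i.lt_succ_self)), hi ▸ Nat.find_spec hx⟩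

theorem exists_mem_Ico_map_succ (h0 : e 0 ≤ x) (hm : x < e m) :
    ∃ i < m, x ∈ Ico (e i) (e (i + 1)) := by
  classical
  have hx : ∃ j, x < e j := ⟨m, hm⟩
  obtain ⟨i, hi⟩ := Nat.exists_eq_add_one_of_ne_zero (n := Nat.find hx) fun h =>
    h0.not_gt (h ▸ Nat.find_spec hx)
  exact ⟨i, by have := Nat.find_min' hx hm; omega,
    not_lt.1 (Nat.find_min hx (hi ▸ i.lt_succ_self)), hi ▸ Nat.find_spec hx⟩

theorem rel_of_rel_on_cells {R : α → α → Prop} (htrans : ∀ x y z, R x y → R y z → R x z)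
    (hleft : ∀ x y, x ≤ y → y ≤ e 0 → R x y) (hright : ∀ x y, e m ≤ x → x ≤ y → R x y)
    (hcell : ∀ i < m, ∀ x y, e i ≤ x → x ≤ y → y ≤ e (i + 1) → R x y) (hxy : x ≤ y) : R x y := by
  have glue : ∀ c, (∀ x y, x ≤ y → y ≤ c → R x y) → ∀ d, (∀ x y, c ≤ x → x ≤ y → y ≤ d → R x y) →
      ∀ x y, x ≤ y → y ≤ d → R x y := by
    intro c hlow d hhigh x y hxy hy
    rcases le_total y c with hyc | hyc
    · exact hlow x y hxy hyc
    rcases le_total c x with hcx | hcx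
    · exact hhigh x y hcx hxy hy
    · exact htrans x c y (hlow x c hcx le_rfl) (hhigh c y le_rfl hyc hy)
  have hlow : ∀ j ≤ m, ∀ x y, x ≤ y → y ≤ e j → R x y := by
    intro j hj
    induction j with
    | zero => exact hleft
    | succ j ih => exact glue (e j) (ih (by omega)) _ (hcell j hj)
  exact glue (e m) (hlow m le_rfl) y (fun x y hx hxy _ => hright x y hx hxy) x y hxy le_rfl

end Cells

/-- `G` is the mass function of the alternating set
`(-∞, e 0) ∪ (e 1, e 2) ∪ ⋯ ∪ (e (2n-1), e (2n))`: the cell `(e i, e (i+1))` is white for even `i`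
and black for odd `i`. -/
structure IsProfile (n : ℕ) (e : ℕ → ℝ) (G : ℝ → ℝ) : Prop where
  lt_succ : ∀ i < 2 * n, e i < e (i + 1)
  left : HasSlopeOn G 1 (Iic (e 0))
  right : HasSlopeOn G 0 (Ici (e (2 * n)))
  cell : ∀ i < 2 * n, HasSlopeOn G (i % 2 : ℕ) (Icc (e i) (e (i + 1)))

/-- The endpoints of the profile `dual G`. -/
def dualEndpoints (n : ℕ) (e : ℕ → ℝ) (i : ℕ) : ℝ := -e (2 * n - i)

/-- The mass function of the set made black to the left of `c` and white on `[c, w]`. -/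
def merge (G : ℝ → ℝ) (c w x : ℝ) : ℝ := G (max w x) + min (x - c) 0

section Profile

variable {n i j k : ℕ} {c w x y : ℝ} {e : ℕ → ℝ} {G G' : ℝ → ℝ}

namespace IsProfile

theorem lt (h : IsProfile n e G) (hij : i < j) (hj : j ≤ 2 * n) : e i < e j := by
  induction j, hij using Nat.le_induction with
  | base => exact h.lt_succ i hj
  | succ k _ ih => exact (ih (by omega)).trans (h.lt_succ k hj)

theorem le (h : IsProfile n e G) (hij : i ≤ j) (hj : j ≤ 2 * n) : e i ≤ e j := by
  rcases hij.eq_or_lt with rfl | hij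
  · exact le_rfl
  · exact (h.lt hij hj).le

theorem lt_iff_lt (h : IsProfile n e G) (hi : i ≤ 2 * n) (hj : j ≤ 2 * n) : e i < e j ↔ i < j :=
  ⟨fun hij => not_le.1 fun hji => (h.le hji hi).not_gt hij, fun hij => h.lt hij hj⟩

theorem eq_iff_eq (h : IsProfile n e G) (hi : i ≤ 2 * n) (hj : j ≤ 2 * n) : e i = e j ↔ i = j := by
  refine ⟨fun hij => ?_, fun hij => hij ▸ rfl⟩
  rcases lt_trichotomy i j with hlt | heq | hlt
  · exact absurd hij (h.lt hlt hj).ne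
  · exact heq
  · exact absurd hij (h.lt hlt hi).ne'

theorem cell_unique (h : IsProfile n e G) (hi : i < 2 * n) (hj : j < 2 * n)
    (hxi : x ∈ Ioo (e i) (e (i + 1))) (hxj : x ∈ Icc (e j) (e (j + 1))) : i = j := by
  have hij := (h.lt_iff_lt (by omega) (by omega)).1 (hxi.1.trans_le hxj.2)
  have hji := (h.lt_iff_lt (by omega) (by omega)).1 (hxj.1.trans_lt hxi.2)
  omega

theorem white (h : IsProfile n e G) (hk : k < n) :
    HasSlopeOn G 0 (Icc (e (2 * k)) (e (2 * k + 1))) := by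
  simpa using h.cell (2 * k) (by omega)

theorem black (h : IsProfile n e G) (hk : k < n) :
    HasSlopeOn G 1 (Icc (e (2 * k + 1)) (e (2 * k + 2))) := by
  simpa [Nat.add_mod] using h.cell (2 * k + 1) (by omega)

theorem isMassFunction (h : IsProfile n e G) : IsMassFunction G := by
  have main : ∀ x y, x ≤ y → 0 ≤ G y - G x ∧ G y - G x ≤ y - x := fun x y hxy => by
    refine rel_of_rel_on_cells e (m := 2 * n)
      (R := fun x y => 0 ≤ G y - G x ∧ G y - G x ≤ y - x) ?_ ?_ ?_ ?_ hxy
    · rintro x y z ⟨h₁, h₂⟩ ⟨h₃, h₄⟩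
      constructor <;> linarith
    · intro x y hxy hy
      rw [h.left x (hxy.trans hy) y hy]
      constructor <;> linarith
    · intro x y hx hxy
      rw [h.right x hx y (hx.trans hxy)]
      constructor <;> linarith
    · intro i hi x y hx hxy hy
      rw [h.cell i hi x ⟨hx, hxy.trans hy⟩ y ⟨hx.trans hxy, hy⟩]
      rcases Nat.mod_two_eq_zero_or_one i with hi | hi <;> rw [hi] <;> push_cast <;>
        constructor <;> linarith
  exact ⟨fun x y hxy => sub_nonneg.1 (main x y hxy).1, fun x y hxy => (main x y hxy).2⟩

theorem sub_eq_sub (h : IsProfile n e G) (h' : IsProfile n e G') (hxy : x ≤ y) :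
    G y - G x = G' y - G' x := by
  refine rel_of_rel_on_cells e (m := 2 * n) (R := fun x y => G y - G x = G' y - G' x)
    ?_ ?_ ?_ ?_ hxy
  · intro x y z h₁ h₂
    linarith
  · intro x y hxy hy
    rw [h.left x (hxy.trans hy) y hy, h'.left x (hxy.trans hy) y hy]
  · intro x y hx hxy
    rw [h.right x hx y (hx.trans hxy), h'.right x hx y (hx.trans hxy)]
  · intro i hi x y hx hxy hy
    rw [h.cell i hi x ⟨hx, hxy.trans hy⟩ y ⟨hx.trans hxy, hy⟩,
      h'.cell i hi x ⟨hx, hxy.trans hy⟩ y ⟨hx.trans hxy, hy⟩]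

theorem dual (h : IsProfile n e G) : IsProfile n (dualEndpoints n e) (dual G) where
  lt_succ i hi := neg_lt_neg (h.lt (by omega) (by omega))
  left x hx y hy := by
    simp only [dualEndpoints, Nat.sub_zero, mem_Iic] at hx hy
    have := h.right (-x) (by simpa using le_neg_of_le_neg hx)
      (-y) (by simpa using le_neg_of_le_neg hy)
    simp only [_root_.dual]
    linarith
  right x hx y hy := by
    simp only [dualEndpoints, Nat.sub_self, mem_Ici] at hx hy
    have := h.left (-x) (by simpa using neg_le_of_neg_le hx)
      (-y) (by simpa using neg_le_of_neg_le hy)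
    simp only [_root_.dual]
    linarith
  cell i hi := by
    have hcell := (h.cell (2 * n - (i + 1)) (by omega)).dual
    rw [show 2 * n - (i + 1) + 1 = 2 * n - i by omega] at hcell
    change HasSlopeOn _ _ (Icc (-e (2 * n - i)) (-e (2 * n - (i + 1))))
    convert hcell using 1
    rcases Nat.mod_two_eq_zero_or_one i with hi' | hi'
    · rw [hi', show (2 * n - (i + 1)) % 2 = 1 by omega]; norm_num
    · rw [hi', show (2 * n - (i + 1)) % 2 = 0 by omega]; norm_num

end IsProfile

theorem isProfile_truncate (hlt : ∀ i < 2 * n, e i < e (i + 1))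
    (hcell : ∀ i < 2 * n, HasSlopeOn G (i % 2 : ℕ) (Icc (e i) (e (i + 1)))) :
    IsProfile n e (truncate G (e 0) (e (2 * n))) := by
  have hle : ∀ {i j}, i ≤ j → j ≤ 2 * n → e i ≤ e j := fun {i j} hij => by
    induction j, hij using Nat.le_induction with
    | base => exact fun _ => le_rfl
    | succ k _ ih => exact fun hk => (ih (by omega)).trans (hlt k hk).le
  have h0 : e 0 ≤ e (2 * n) := hle (Nat.zero_le _) le_rfl
  refine ⟨hlt, fun x hx y hy => ?_, fun x hx y hy => ?_, fun i hi => (hcell i hi).congr ?_⟩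
  · rw [truncate_of_le_left h0 hx, truncate_of_le_left h0 hy]
    ring
  · rw [truncate_of_right_le h0 hx, truncate_of_right_le h0 hy]
    ring
  · have hsub : Icc (e i) (e (i + 1)) ⊆ Icc (e 0) (e (2 * n)) :=
      Icc_subset_Icc (hle (Nat.zero_le _) hi.le) (hle hi le_rfl)
    intro x hx y hy
    rw [truncate_of_mem (hsub hx), truncate_of_mem (hsub hy)]

theorem IsProfile.truncate (h : IsProfile n e G) (hij : j ≤ i) (hi : i ≤ n) :
    IsProfile (i - j) (fun m => e (2 * j + m)) (truncate G (e (2 * j)) (e (2 * i))) := by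
  have := isProfile_truncate (G := G) (n := i - j) (e := fun m => e (2 * j + m))
    (fun m hm => h.lt_succ _ (by omega))
    (fun m hm => by
      simpa only [Nat.mul_add_mod_self_left, add_assoc] using h.cell (2 * j + m) (by omega))
  rwa [add_zero, show 2 * j + 2 * (i - j) = 2 * i by omega] at this

theorem IsProfile.truncate_reverse (h : IsProfile n e G) (hij : j ≤ i) (hi : i < n) :
    IsProfile (i - j) (fun m => -e (2 * i + 1 - m))
      (_root_.truncate (reverse G) (-e (2 * i + 1)) (-e (2 * j + 1))) := by
  have := isProfile_truncate (G := reverse G) (n := i - j) (e := fun m => -e (2 * i + 1 - m))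
    (fun m hm => neg_lt_neg (h.lt (by omega) (by omega))) fun m hm => by
      have hcell := (h.cell (2 * i + 1 - (m + 1)) (by omega)).reverse
      rwa [show 2 * i + 1 - (m + 1) + 1 = 2 * i + 1 - m by omega,
        show (2 * i + 1 - (m + 1)) % 2 = m % 2 by omega] at hcell
  rwa [Nat.sub_zero, show 2 * i + 1 - 2 * (i - j) = 2 * j + 1 by omega] at this

theorem merge_of_le (hcw : c ≤ w) (hx : x ≤ c) : merge G c w x = G w - (c - x) := by
  rw [merge, max_eq_left (hx.trans hcw), min_eq_left (by linarith)]
  ring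

theorem merge_of_mem (hx : x ∈ Icc c w) : merge G c w x = G w := by
  rw [merge, max_eq_left hx.2, min_eq_right (by linarith [hx.1]), add_zero]

theorem merge_of_ge (hcw : c ≤ w) (hx : w ≤ x) : merge G c w x = G x := by
  rw [merge, max_eq_right hx, min_eq_right (by linarith), add_zero]

theorem IsProfile.merge (h : IsProfile n e G) (hk : k < n)
    (hw : w ∈ Icc (e (2 * k)) (e (2 * k + 1))) (hcw : c ≤ w) (hc : c < e (2 * k + 1)) :
    IsProfile (n - k) (fun m => if m = 0 then c else e (2 * k + m)) (merge G c w) := by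
  have hmerge : ∀ x, e (2 * k + 1) ≤ x → _root_.merge G c w x = G x := fun x hx =>
    merge_of_ge hcw (hw.2.trans hx)
  refine ⟨?_, fun x hx y hy => ?_, ?_, ?_⟩
  · rintro (_ | m) hm
    · simpa using hc
    · simpa [add_assoc] using h.lt_succ (2 * k + (m + 1)) (by omega)
  · simp only [if_true, mem_Iic] at hx hy
    rw [merge_of_le hcw hx, merge_of_le hcw hy]
    ring
  · rw [if_neg (by omega), show 2 * k + 2 * (n - k) = 2 * n by omega]
    have hle := h.le (i := 2 * k + 1) (j := 2 * n) (by omega) le_rfl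
    exact h.right.congr fun x hx y hy => by rw [hmerge x (hle.trans hx), hmerge y (hle.trans hy)]
  · rintro (_ | m) hm
    · have hconst : ∀ x ∈ Icc c (e (2 * k + 1)), _root_.merge G c w x = G w := by
        intro x hx
        rcases le_total x w with hxw | hxw
        · exact merge_of_mem ⟨hx.1, hxw⟩
        · rw [merge_of_ge hcw hxw]
          linarith [h.white hk w hw x ⟨hw.1.trans hxw, hx.2⟩]
      intro x hx y hy
      simp only [if_true, zero_add, one_ne_zero, if_false] at hx hy
      rw [hconst x hx, hconst y hy]
      simp
    · have hle := h.le (i := 2 * k + 1) (j := 2 * k + (m + 1)) (by omega) (by omega)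
      have hcell := h.cell (2 * k + (m + 1)) (by omega)
      rw [Nat.mul_add_mod_self_left] at hcell
      simp only [Nat.add_eq_zero_iff, one_ne_zero, and_false, if_false]
      exact hcell.congr fun x hx y hy => by
        rw [hmerge x (hle.trans hx.1), hmerge y (hle.trans hy.1)]

end Profile

/-! ### Components of the black and white unions -/

section Absorb

variable {α ι κ : Type*} {U V : Set α} {I : ι → Set α} {x : α} {i : ι}

/-- The union of `U` and of those members of the family `I` which meet `U`. -/
def absorb (U : Set α) (I : ι → Set α) : Set α := U ∪ ⋃ (i) (_ : (U ∩ I i).Nonempty), I i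

theorem mem_absorb : x ∈ absorb U I ↔ x ∈ U ∨ ∃ i, (U ∩ I i).Nonempty ∧ x ∈ I i := by
  simp only [absorb, mem_union, mem_iUnion, exists_prop]

theorem subset_absorb : U ⊆ absorb U I := subset_union_left

theorem absorb_mono (h : U ⊆ V) : absorb U I ⊆ absorb V I := fun x hx => by
  rw [mem_absorb] at hx ⊢
  exact hx.imp (@h x) fun ⟨i, hi, hx⟩ => ⟨i, hi.mono (inter_subset_inter_left _ h), hx⟩

theorem isOpen_absorb [TopologicalSpace α] (hU : IsOpen U) (hI : ∀ i, IsOpen (I i)) :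
    IsOpen (absorb U I) :=
  hU.union (isOpen_iUnion fun i => isOpen_iUnion fun _ => hI i)

theorem mem_of_mem_absorb (hx : x ∈ absorb U I) (hI : ∀ i, x ∉ I i) : x ∈ U :=
  (mem_absorb.1 hx).resolve_right fun ⟨i, _, hi⟩ => hI i hi

theorem inter_nonempty_of_mem_absorb (hI : Pairwise (Function.onFun Disjoint I))
    (hx : x ∈ absorb U I) (hxi : x ∈ I i) : (U ∩ I i).Nonempty := by
  rcases mem_absorb.1 hx with hU | ⟨j, hj, hxj⟩
  · exact ⟨x, hU, hxi⟩
  · by_cases hij : i = j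
    · exact hij ▸ hj
    · exact absurd hxj (disjoint_left.1 (hI hij) hxi)

theorem subset_absorb_of_mem (hI : Pairwise (Function.onFun Disjoint I))
    (hx : x ∈ absorb U I) (hxi : x ∈ I i) : I i ⊆ absorb U I := fun _ hy =>
  mem_absorb.2 (Or.inr ⟨i, inter_nonempty_of_mem_absorb hI hx hxi, hy⟩)

theorem neg_mem_absorb_iff [InvolutiveNeg α] {I' : κ → Set α} (σ : κ ≃ ι)
    (hUV : ∀ x, -x ∈ V ↔ x ∈ U) (hI : ∀ j x, -x ∈ I' j ↔ x ∈ I (σ j)) :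
    -x ∈ absorb V I' ↔ x ∈ absorb U I := by
  rw [mem_absorb, mem_absorb, hUV]
  refine or_congr Iff.rfl (σ.exists_congr fun j => and_congr ⟨?_, ?_⟩ (hI j x))
  · rintro ⟨y, hyV, hyI⟩
    exact ⟨-y, (hUV (-y)).1 (by rwa [neg_neg]), (hI j (-y)).1 (by rwa [neg_neg])⟩
  · rintro ⟨y, hyU, hyI⟩
    exact ⟨-y, (hUV y).2 hyU, (hI j y).2 hyI⟩

end Absorb

/-- The open interval `(s, t)` is a connected component of `U`. -/
structure IsComponentIoo (U : Set ℝ) (s t : ℝ) : Prop where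
  lt : s < t
  subset : Ioo s t ⊆ U
  left_notMem : s ∉ U
  right_notMem : t ∉ U

namespace IsComponentIoo

variable {U V J : Set ℝ} {s t s' t' x a b : ℝ}

theorem subset_of_ordConnected (h : IsComponentIoo U s t) (hJ : J.OrdConnected) (hJU : J ⊆ U)
    (hxJ : x ∈ J) (hx : x ∈ Ioo s t) : J ⊆ Ioo s t := fun _ hy =>
  ⟨not_le.1 fun hys => h.left_notMem (hJU (hJ.out hy hxJ ⟨hys, hx.1.le⟩)),
    not_le.1 fun hty => h.right_notMem (hJU (hJ.out hxJ hy ⟨hx.2.le, hty⟩))⟩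

theorem le_and_le_of_Ioo_subset (h : IsComponentIoo U s t) (hU : Ioo a b ⊆ U)
    (hxab : x ∈ Ioo a b) (hx : x ∈ Ioo s t) : s ≤ a ∧ b ≤ t :=
  (Ioo_subset_Ioo_iff (hxab.1.trans hxab.2)).1
    (h.subset_of_ordConnected ordConnected_Ioo hU hxab hx)

theorem eq_and_eq (h : IsComponentIoo U s t) (h' : IsComponentIoo U s' t') (hx : x ∈ Ioo s t)
    (hx' : x ∈ Ioo s' t') : s = s' ∧ t = t' := by
  have h₁ := h.le_and_le_of_Ioo_subset h'.subset hx' hx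
  have h₂ := h'.le_and_le_of_Ioo_subset h.subset hx hx'
  exact ⟨h₁.1.antisymm h₂.1, h₂.2.antisymm h₁.2⟩

theorem neg (h : IsComponentIoo U s t) (hUV : ∀ x, -x ∈ V ↔ x ∈ U) :
    IsComponentIoo V (-t) (-s) where
  lt := neg_lt_neg h.lt
  subset x hx := by
    rw [← neg_neg x, hUV]
    exact h.subset ⟨by linarith [hx.2], by linarith [hx.1]⟩
  left_notMem := by rw [hUV]; exact h.right_notMem
  right_notMem := by rw [hUV]; exact h.left_notMem

theorem connectedComponentIn_eq (h : IsComponentIoo U s t) (hx : x ∈ Ioo s t) :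
    connectedComponentIn U x = Ioo s t :=
  (h.subset_of_ordConnected isPreconnected_connectedComponentIn.ordConnected
    (connectedComponentIn_subset U x) (mem_connectedComponentIn (h.subset hx)) hx).antisymm
      (isPreconnected_Ioo.subset_connectedComponentIn hx h.subset)

end IsComponentIoo

theorem exists_isComponentIoo {U : Set ℝ} {a b x : ℝ} (hU : IsOpen U) (hx : x ∈ U)
    (hax : a ≤ x) (ha : a ∉ U) (hxb : x ≤ b) (hb : b ∉ U) :
    ∃ s t, IsComponentIoo U s t ∧ x ∈ Ioo s t := by
  obtain ⟨s, ⟨⟨-, hsx⟩, hsU⟩, hs⟩ :=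
    (isCompact_Icc.inter_right hU.isClosed_compl : IsCompact (Icc a x ∩ Uᶜ)).exists_isGreatest
      ⟨a, ⟨le_rfl, hax⟩, ha⟩
  obtain ⟨t, ⟨⟨hxt, -⟩, htU⟩, ht⟩ :=
    (isCompact_Icc.inter_right hU.isClosed_compl : IsCompact (Icc x b ∩ Uᶜ)).exists_isLeast
      ⟨b, ⟨hxb, le_rfl⟩, hb⟩
  have hsx : s < x := lt_of_le_of_ne hsx fun h => hsU (h ▸ hx)
  have hxt : x < t := lt_of_le_of_ne hxt fun h => htU (h ▸ hx)
  refine ⟨s, t, ⟨hsx.trans hxt, fun y hy => by_contra fun hyU => ?_, hsU, htU⟩, hsx, hxt⟩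
  rcases le_total y x with hyx | hxy
  · rcases le_total a y with hay | hya
    · exact (hs ⟨⟨hay, hyx⟩, hyU⟩).not_gt hy.1
    · exact (hs ⟨⟨le_rfl, hax⟩, ha⟩).not_gt (hy.1.trans_le hya)
  · rcases le_total y b with hyb | hby
    · exact (ht ⟨⟨hxy, hyb⟩, hyU⟩).not_gt hy.2
    · exact (ht ⟨⟨hxb, le_rfl⟩, hb⟩).not_gt (hby.trans_lt hy.2)

section Unions

variable {r : ℕ} {e : ℕ → ℝ} {G : ℝ → ℝ} {P Q : Set (ℝ × ℝ)} {p : ℝ × ℝ} {x : ℝ}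

/-- The union of the intervals with centre `p.1` and radius `p.2`, over `p ∈ P`. -/
def balls (P : Set (ℝ × ℝ)) : Set ℝ := ⋃ p ∈ P, Ioo (p.1 - p.2) (p.1 + p.2)

/-- The `k`-th bounded interval of the alternating set with endpoints `e`. -/
def blackCell (r : ℕ) (e : ℕ → ℝ) (k : Fin r) : Set ℝ := Ioo (e (2 * k + 1)) (e (2 * k + 2))

/-- The gap of the alternating set with endpoints `e` before its `k`-th bounded interval. -/
def whiteCell (r : ℕ) (e : ℕ → ℝ) (k : Fin r) : Set ℝ := Ioo (e (2 * k)) (e (2 * k + 1))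

/-- The set `F_B` of the paper, for the family `P` of black intervals. -/
def blackUnion (r : ℕ) (e : ℕ → ℝ) (P : Set (ℝ × ℝ)) : Set ℝ := absorb (balls P) (blackCell r e)

/-- The set `F_W` of the paper, for the family `Q` of white intervals, except that the first white
cell `(e 0, e 1)` takes part in the absorption as well. -/
def whiteUnion (r : ℕ) (e : ℕ → ℝ) (Q : Set (ℝ × ℝ)) : Set ℝ := absorb (balls Q) (whiteCell r e)

/-- The family of the reflected intervals. -/
def negCenters (P : Set (ℝ × ℝ)) : Set (ℝ × ℝ) := {p | (-p.1, p.2) ∈ P}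

theorem mem_balls : x ∈ balls P ↔ ∃ p ∈ P, x ∈ Ioo (p.1 - p.2) (p.1 + p.2) := by
  simp only [balls, mem_iUnion, exists_prop]

theorem isOpen_balls : IsOpen (balls P) := isOpen_biUnion fun _ _ => isOpen_Ioo

theorem Ioo_subset_balls (hp : p ∈ P) : Ioo (p.1 - p.2) (p.1 + p.2) ⊆ balls P :=
  subset_biUnion_of_mem (u := fun p : ℝ × ℝ => Ioo (p.1 - p.2) (p.1 + p.2)) hp

theorem neg_mem_balls_negCenters : -x ∈ balls (negCenters P) ↔ x ∈ balls P := by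
  simp only [mem_balls]
  constructor
  · rintro ⟨p, hp, h⟩
    exact ⟨(-p.1, p.2), hp, by dsimp only; linarith [h.2], by dsimp only; linarith [h.1]⟩
  · rintro ⟨p, hp, h⟩
    exact ⟨(-p.1, p.2), by simpa [negCenters] using hp, by dsimp only; linarith [h.2],
      by dsimp only; linarith [h.1]⟩

theorem neg_mem_blackCell_dualEndpoints (k : Fin r) :
    -x ∈ blackCell r (dualEndpoints r e) k ↔ x ∈ whiteCell r e k.rev := by
  have h₁ : 2 * r - (2 * k + 1) = 2 * (r - (k + 1)) + 1 := by omega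
  have h₂ : 2 * r - (2 * k + 2) = 2 * (r - (k + 1)) := by omega
  simp only [blackCell, whiteCell, dualEndpoints, Fin.val_rev, h₁, h₂, mem_Ioo, neg_lt_neg_iff,
    and_comm]

theorem neg_mem_whiteCell_dualEndpoints (k : Fin r) :
    -x ∈ whiteCell r (dualEndpoints r e) k ↔ x ∈ blackCell r e k.rev := by
  have h₁ : 2 * r - (2 * k + 1) = 2 * (r - (k + 1)) + 1 := by omega
  have h₂ : 2 * r - 2 * k = 2 * (r - (k + 1)) + 2 := by omega
  simp only [blackCell, whiteCell, dualEndpoints, Fin.val_rev, h₁, h₂, mem_Ioo, neg_lt_neg_iff,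
    and_comm]

theorem neg_mem_blackUnion_dual :
    -x ∈ blackUnion r (dualEndpoints r e) (negCenters Q) ↔ x ∈ whiteUnion r e Q :=
  neg_mem_absorb_iff Fin.revPerm (fun _ => neg_mem_balls_negCenters)
    fun k _ => neg_mem_blackCell_dualEndpoints k

theorem neg_mem_whiteUnion_dual :
    -x ∈ whiteUnion r (dualEndpoints r e) (negCenters P) ↔ x ∈ blackUnion r e P :=
  neg_mem_absorb_iff Fin.revPerm (fun _ => neg_mem_balls_negCenters)
    fun k _ => neg_mem_whiteCell_dualEndpoints k

theorem isOpen_blackUnion : IsOpen (blackUnion r e P) :=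
  isOpen_absorb isOpen_balls fun _ => isOpen_Ioo

theorem IsProfile.pairwise_disjoint_blackCell (h : IsProfile r e G) :
    Pairwise (Function.onFun Disjoint (blackCell r e)) := fun k l hkl =>
  disjoint_left.2 fun _ hk hl => hkl <| Fin.ext <| by
    have := h.cell_unique (by omega) (by omega) hk (Ioo_subset_Icc_self hl)
    omega

theorem IsProfile.notMem_blackCell_of_mem (h : IsProfile r e G) {k : ℕ} (hk : k < r)
    (hx : x ∈ Icc (e (2 * k)) (e (2 * k + 1))) (l : Fin r) : x ∉ blackCell r e l := fun hl => by
  have := h.cell_unique (by omega) (by omega) hl hx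
  omega

theorem IsProfile.notMem_blackCell_endpoint (h : IsProfile r e G) {i : ℕ} (hi : i ≤ 2 * r)
    (l : Fin r) : e i ∉ blackCell r e l := fun hl => by
  have h₁ := (h.lt_iff_lt (by omega) hi).1 hl.1
  have h₂ := (h.lt_iff_lt hi (by omega)).1 hl.2
  omega

end Unions

/-! ### Frames -/

/-- The endpoints of a profile which lie strictly between `vB` and `vW`. -/
def innerEndpoints (r : ℕ) (E : ℕ → ℝ) (vB vW : ℝ) : Set ℝ := E '' Iic (2 * r) ∩ Ioo vB vW

/-- All pairs of an inner endpoint and an extremal black radius. -/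
def blackRadii (δ : ℝ) (r : ℕ) (E : ℕ → ℝ) (G : ℝ → ℝ) (vB vW : ℝ) : Set (ℝ × ℝ) :=
  {p | p.1 ∈ innerEndpoints r E vB vW ∧ IsBlackRadius δ G p.1 p.2}

/-- All pairs of an inner endpoint and an extremal white radius. -/
def whiteRadii (δ : ℝ) (r : ℕ) (E : ℕ → ℝ) (G : ℝ → ℝ) (vB vW : ℝ) : Set (ℝ × ℝ) :=
  {p | p.1 ∈ innerEndpoints r E vB vW ∧ IsWhiteRadius δ G p.1 p.2}

/-- A minimal counterexample, given by its profile, together with thresholds `vB` and `vW` having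
the properties of `v_B` and `v_W` that the argument needs. For an endpoint `x` left of the middle,
the density over `(2 x - E (2 r), E (2 r))` is at least `1 - δ` exactly when
`(x - E 0) + (1 - 2 δ) (E (2 r) - x)` is at most the total mass of the profile; this is the form in
which `ω(x) ≥ 1 - x` is recorded. -/
structure IsFrame (δ : ℝ) (r : ℕ) (E : ℕ → ℝ) (G : ℝ → ℝ) (vB vW : ℝ) : Prop where
  pos_delta : 0 < δ
  delta_lt : δ < 1 / 2
  pos : 0 < r
  isProfile : IsProfile r E G
  minimal : ∀ n < r, ∀ e G', IsProfile n e G' → ∃ i ≤ 2 * n, ¬IsUnbalanced δ G' (e i)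
  black_le_mass : (vB - E 0) + (1 - 2 * δ) * (E (2 * r) - vB) ≤ G (E (2 * r)) - G (E 0)
  mass_le_white : G (E (2 * r)) - G (E 0) ≤ 2 * δ * (vW - E 0)
  le_black : ∀ i ≤ 2 * r, E i - E 0 < E (2 * r) - E i →
    (E i - E 0) + (1 - 2 * δ) * (E (2 * r) - E i) ≤ G (E (2 * r)) - G (E 0) → E i ≤ vB
  white_le : ∀ i ≤ 2 * r, E (2 * r) - E i < E i - E 0 →
    G (E (2 * r)) - G (E 0) ≤ 2 * δ * (E i - E 0) → vW ≤ E i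
  black_le_mid : 2 * vB ≤ E 0 + E (2 * r)
  mid_le_white : E 0 + E (2 * r) ≤ 2 * vW
  first_le_black : E 0 ≤ vB
  white_le_last : vW ≤ E (2 * r)

/-- `P` and `Q` consist of extremal black and white radii, and each inner endpoint has a witness
among them. -/
structure IsCover (δ : ℝ) (r : ℕ) (E : ℕ → ℝ) (G : ℝ → ℝ) (vB vW : ℝ) (P Q : Set (ℝ × ℝ)) :
    Prop where
  black : P ⊆ blackRadii δ r E G vB vW
  white : Q ⊆ whiteRadii δ r E G vB vW
  exists_witness : ∀ x ∈ innerEndpoints r E vB vW,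
    (∃ ρ, (x, ρ) ∈ P ∧ IsBlackWitness δ G x ρ) ∨ ∃ ρ, (x, ρ) ∈ Q ∧ IsWhiteWitness δ G x ρ

section Frame

variable {δ vB vW s t x : ℝ} {r : ℕ} {E : ℕ → ℝ} {G : ℝ → ℝ} {P Q : Set (ℝ × ℝ)} {p : ℝ × ℝ}

theorem IsFrame.dual (S : IsFrame δ r E G vB vW) :
    IsFrame δ r (dualEndpoints r E) (dual G) (-vW) (-vB) where
  pos_delta := S.pos_delta
  delta_lt := S.delta_lt
  pos := S.pos
  isProfile := S.isProfile.dual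
  minimal := S.minimal
  black_le_mass := by
    simp only [dualEndpoints, _root_.dual, Nat.sub_zero, Nat.sub_self, neg_neg]
    linarith [S.mass_le_white]
  mass_le_white := by
    simp only [dualEndpoints, _root_.dual, Nat.sub_zero, Nat.sub_self, neg_neg]
    linarith [S.black_le_mass]
  le_black i _ h₁ h₂ := by
    simp only [dualEndpoints, _root_.dual, Nat.sub_zero, Nat.sub_self, neg_neg] at h₁ h₂ ⊢
    linarith [S.white_le (2 * r - i) (by omega) (by linarith) (by linarith)]
  white_le i _ h₁ h₂ := by
    simp only [dualEndpoints, _root_.dual, Nat.sub_zero, Nat.sub_self, neg_neg] at h₁ h₂ ⊢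
    linarith [S.le_black (2 * r - i) (by omega) (by linarith) (by linarith)]
  black_le_mid := by
    simp only [dualEndpoints, Nat.sub_zero, Nat.sub_self]
    linarith [S.mid_le_white]
  mid_le_white := by
    simp only [dualEndpoints, Nat.sub_zero, Nat.sub_self]
    linarith [S.black_le_mid]
  first_le_black := by simpa only [dualEndpoints, Nat.sub_zero] using neg_le_neg S.white_le_last
  white_le_last := by simpa only [dualEndpoints, Nat.sub_self] using neg_le_neg S.first_le_black

theorem neg_mem_innerEndpoints_dual :
    -x ∈ innerEndpoints r (dualEndpoints r E) (-vW) (-vB) ↔ x ∈ innerEndpoints r E vB vW := by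
  have himage : -x ∈ dualEndpoints r E '' Iic (2 * r) ↔ x ∈ E '' Iic (2 * r) := by
    constructor
    · rintro ⟨i, -, hi⟩
      exact ⟨2 * r - i, Nat.sub_le _ _, neg_injective hi⟩
    · rintro ⟨i, hi, rfl⟩
      exact ⟨2 * r - i, Nat.sub_le _ _, by rw [dualEndpoints, Nat.sub_sub_self hi]⟩
  refine and_congr himage ?_
  simp only [mem_Ioo, neg_lt_neg_iff, and_comm]

theorem negCenters_whiteRadii :
    negCenters (whiteRadii δ r E G vB vW) =
      blackRadii δ r (dualEndpoints r E) (dual G) (-vW) (-vB) := by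
  ext ⟨x, ρ⟩
  have hinner := neg_mem_innerEndpoints_dual (x := -x) (r := r) (E := E) (vB := vB) (vW := vW)
  have hradius := isBlackRadius_dual_neg (δ := δ) (G := G) (x := -x) (ρ := ρ)
  rw [neg_neg] at hinner hradius
  exact and_congr hinner.symm hradius.symm

theorem negCenters_blackRadii :
    negCenters (blackRadii δ r E G vB vW) =
      whiteRadii δ r (dualEndpoints r E) (dual G) (-vW) (-vB) := by
  ext ⟨x, ρ⟩
  have hinner := neg_mem_innerEndpoints_dual (x := -x) (r := r) (E := E) (vB := vB) (vW := vW)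
  have hradius := isWhiteRadius_dual_neg (δ := δ) (G := G) (x := -x) (ρ := ρ)
  rw [neg_neg] at hinner hradius
  exact and_congr hinner.symm hradius.symm

theorem negCenters_subset_blackRadii (hQ : Q ⊆ whiteRadii δ r E G vB vW) :
    negCenters Q ⊆ blackRadii δ r (dualEndpoints r E) (dual G) (-vW) (-vB) :=
  negCenters_whiteRadii ▸ fun _ hp => hQ hp

theorem IsCover.dual (hPQ : IsCover δ r E G vB vW P Q) :
    IsCover δ r (dualEndpoints r E) (dual G) (-vW) (-vB) (negCenters Q) (negCenters P) where
  black := negCenters_subset_blackRadii hPQ.white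
  white := negCenters_blackRadii ▸ fun _ hp => hPQ.black hp
  exists_witness x hx := by
    obtain ⟨y, rfl⟩ : ∃ y, x = -y := ⟨-x, (neg_neg x).symm⟩
    rw [neg_mem_innerEndpoints_dual] at hx
    simpa only [isBlackWitness_dual_neg, isWhiteWitness_dual_neg, negCenters, mem_ofPred_eq,
      neg_neg] using (hPQ.exists_witness y hx).symm

/-! ### Geometry of the components -/

theorem ball_subset_component {ι : Type*} {I : ι → Set ℝ}
    (hc : IsComponentIoo (absorb (balls P) I) s t) (hp : p ∈ P)
    (hxp : x ∈ Ioo (p.1 - p.2) (p.1 + p.2)) (hx : x ∈ Ioo s t) : s ≤ p.1 - p.2 ∧ p.1 + p.2 ≤ t :=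
  hc.le_and_le_of_Ioo_subset ((Ioo_subset_balls hp).trans subset_absorb) hxp hx

theorem IsProfile.notMem_blackCell_of_isComponentIoo (h : IsProfile r E G)
    (hc : IsComponentIoo (blackUnion r E P) s t) (k : Fin r) :
    s ∉ blackCell r E k ∧ t ∉ blackCell r E k := by
  have hsub : ∀ x ∈ Ioo s t, x ∈ blackCell r E k → blackCell r E k ⊆ blackUnion r E P :=
    fun x hx hxk => subset_absorb_of_mem h.pairwise_disjoint_blackCell (hc.subset hx) hxk
  constructor
  · intro hs
    obtain ⟨x, hsx, hx⟩ := exists_between (lt_min hc.lt hs.2)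
    obtain ⟨hxt, hxE⟩ := lt_min_iff.1 hx
    exact hc.left_notMem (hsub x ⟨hsx, hxt⟩ ⟨hs.1.trans hsx, hxE⟩ hs)
  · intro ht
    obtain ⟨x, hx, hxt⟩ := exists_between (max_lt hc.lt ht.1)
    obtain ⟨hsx, hEx⟩ := max_lt_iff.1 hx
    exact hc.right_notMem (hsub x ⟨hsx, hxt⟩ ⟨hEx, hxt.trans ht.2⟩ ht)

theorem IsProfile.exists_endpoint_mem_ball (he : IsProfile r E G) {i : ℕ} (hi : i ≤ 2 * r)
    (h : E i ∈ blackUnion r E P) : ∃ p ∈ P, E i ∈ Ioo (p.1 - p.2) (p.1 + p.2) :=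
  mem_balls.1 (mem_of_mem_absorb h (he.notMem_blackCell_endpoint hi))

theorem IsProfile.exists_endpoint_mem_white_ball (he : IsProfile r E G) {i : ℕ}
    (hi : i ≤ 2 * r) (h : E i ∈ whiteUnion r E Q) : ∃ q ∈ Q, E i ∈ Ioo (q.1 - q.2) (q.1 + q.2) := by
  have hE : -E i = dualEndpoints r E (2 * r - i) := by rw [dualEndpoints, Nat.sub_sub_self hi]
  rw [← neg_mem_blackUnion_dual, hE] at h
  have := mem_balls.2 (he.dual.exists_endpoint_mem_ball (Nat.sub_le _ _) h)
  rwa [← hE, neg_mem_balls_negCenters, mem_balls] at this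

namespace IsFrame

theorem exists_center_mem (S : IsFrame δ r E G vB vW) (hP : P ⊆ blackRadii δ r E G vB vW)
    (hc : IsComponentIoo (blackUnion r E P) s t) : ∃ p ∈ P, p.1 ∈ Ioo s t := by
  obtain ⟨p, hp, x, hxp, hx⟩ : ∃ p ∈ P, ∃ x ∈ Ioo (p.1 - p.2) (p.1 + p.2), x ∈ Ioo s t := by
    obtain ⟨x, hx⟩ := nonempty_Ioo.2 hc.lt
    by_cases hxU : x ∈ balls P
    · obtain ⟨p, hp, hxp⟩ := mem_balls.1 hxU
      exact ⟨p, hp, x, hxp, hx⟩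
    obtain ⟨k, hk, hxk⟩ := (mem_absorb.1 (hc.subset hx)).resolve_left hxU
    obtain ⟨y, hy, hyk⟩ := hk
    obtain ⟨p, hp, hyp⟩ := mem_balls.1 hy
    have hcell := hc.subset_of_ordConnected ordConnected_Ioo
      (subset_absorb_of_mem S.isProfile.pairwise_disjoint_blackCell (hc.subset hx) hxk) hxk hx
    exact ⟨p, hp, y, hyp, hcell hyk⟩
  have hball := ball_subset_component hc hp hxp hx
  have hpos := (hP hp).2.pos
  exact ⟨p, hp, by linarith, by linarith⟩

theorem mul_le_sub_apply_of_component (S : IsFrame δ r E G vB vW)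
    (hP : P ⊆ blackRadii δ r E G vB vW) (hc : IsComponentIoo (blackUnion r E P) s t)
    (hx : x ∈ Ioc s t) : (1 - 2 * δ) * (t - x) ≤ G t - G x := by
  have hG := S.isProfile.isMassFunction
  have hδ := S.pos_delta
  have hstep : ∀ z ∈ Ioo s t, ∃ y ∈ Ioc z t, (1 - 2 * δ) * (y - z) ≤ G y - G z := by
    intro z hz
    rcases mem_absorb.1 (hc.subset hz) with hzP | ⟨k, -, hzk⟩
    · obtain ⟨p, hp, hzp⟩ := mem_balls.1 hzP
      exact ⟨p.1 + p.2, ⟨hzp.2, (ball_subset_component hc hp hzp hz).2⟩,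
        (hP hp).2.mul_le_sub_apply hG hδ.le hzp⟩
    · have hcell := subset_absorb_of_mem S.isProfile.pairwise_disjoint_blackCell (hc.subset hz) hzk
      refine ⟨E (2 * k + 2), ⟨hzk.2, (hc.le_and_le_of_Ioo_subset hcell hzk hz).2⟩, ?_⟩
      rw [S.isProfile.black k.2 z (Ioo_subset_Icc_self hzk) _ ⟨(hzk.1.trans hzk.2).le, le_rfl⟩]
      nlinarith [hzk.2]
  have hclosed : IsClosed ({y | (1 - 2 * δ) * (y - x) ≤ G y - G x} ∩ Icc x t) :=
    (isClosed_le (by fun_prop) (hG.continuous.sub continuous_const)).inter isClosed_Icc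
  refine hclosed.mem_of_ge_of_forall_exists_gt (by simp) hx.2 fun z hz => ?_
  obtain ⟨y, hy, hmass⟩ := hstep z ⟨hx.1.trans_le hz.2.1, hz.2.2⟩
  have hzx : (1 - 2 * δ) * (z - x) ≤ G z - G x := hz.1
  exact ⟨y, by simp only [mem_ofPred_eq]; linarith, hy⟩

theorem apply_lt_right_of_component (S : IsFrame δ r E G vB vW)
    (hP : P ⊆ blackRadii δ r E G vB vW) (hc : IsComponentIoo (blackUnion r E P) s t)
    (hx : x ∈ Ioo s t) : G x < G t := by
  have := S.mul_le_sub_apply_of_component hP hc (Ioo_subset_Ioc_self hx)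
  have : 0 < (1 - 2 * δ) * (t - x) := mul_pos (by linarith [S.delta_lt]) (sub_pos.2 hx.2)
  linarith

theorem right_eq_of_component (S : IsFrame δ r E G vB vW) (hP : P ⊆ blackRadii δ r E G vB vW)
    (hc : IsComponentIoo (blackUnion r E P) s t) : ∃ k < r, t = E (2 * k + 2) := by
  have not_white : ∀ a < t, ¬HasSlopeOn G 0 (Icc a t) := by
    intro a ha hslope
    obtain ⟨x, hx, hxt⟩ := exists_between (max_lt hc.lt ha)
    obtain ⟨hsx, hax⟩ := max_lt_iff.1 hx
    have := S.apply_lt_right_of_component hP hc ⟨hsx, hxt⟩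
    linarith [hslope x ⟨hax.le, hxt.le⟩ t ⟨ha.le, le_rfl⟩]
  have h0t : E 0 < t := by
    obtain ⟨p, hp, hpt⟩ := S.exists_center_mem hP hc
    linarith [S.first_le_black, (hP hp).1.2.1, hpt.2]
  have htr : t ≤ E (2 * r) := not_lt.1 fun h =>
    not_white _ h (S.isProfile.right.mono Icc_subset_Ici_self)
  obtain ⟨i, hi, hti⟩ := exists_mem_Ioc_map_succ E h0t htr
  rcases Nat.even_or_odd' i with ⟨k, rfl | rfl⟩
  · exact absurd ((S.isProfile.white (by omega)).mono (Icc_subset_Icc_right hti.2))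
      (not_white _ hti.1)
  · refine ⟨k, by omega, hti.2.eq_of_not_lt fun h => ?_⟩
    exact (S.isProfile.notMem_blackCell_of_isComponentIoo hc ⟨k, by omega⟩).2 ⟨hti.1, h⟩

theorem left_eq_of_component (S : IsFrame δ r E G vB vW) (hP : P ⊆ blackRadii δ r E G vB vW)
    (hc : IsComponentIoo (blackUnion r E P) s t) : s < E 0 ∨ ∃ k < r, s = E (2 * k + 1) := by
  obtain ⟨l, hl, htl⟩ := S.right_eq_of_component hP hc
  have hsr : s < E (2 * r) := hc.lt.trans_le (htl ▸ S.isProfile.le (by omega) le_rfl)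
  refine (lt_or_ge s (E 0)).imp_right fun h0s => ?_
  obtain ⟨i, hi, hsi⟩ := exists_mem_Ico_map_succ E h0s hsr
  rcases Nat.even_or_odd' i with ⟨k, rfl | rfl⟩
  · have hwhite := S.isProfile.white (k := k) (by omega)
    obtain ⟨x, hsx, hx⟩ := exists_between (lt_min hc.lt hsi.2)
    obtain ⟨hxt, hxE⟩ := lt_min_iff.1 hx
    have hxk : x ∈ Icc (E (2 * k)) (E (2 * k + 1)) := ⟨hsi.1.trans hsx.le, hxE.le⟩
    obtain ⟨p, hp, hxp⟩ := mem_balls.1 (mem_of_mem_absorb (hc.subset ⟨hsx, hxt⟩)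
      (S.isProfile.notMem_blackCell_of_mem (by omega) hxk))
    have hsp := (ball_subset_component hc hp hxp ⟨hsx, hxt⟩).1
    have := (hP hp).2.apply_left_lt S.isProfile.isMassFunction S.pos_delta.le S.delta_lt hxp.1
    linarith [hwhite (p.1 - p.2) ⟨hsi.1.trans hsp, hxp.1.le.trans hxE.le⟩ x hxk]
  · refine ⟨k, by omega, (hsi.1.eq_of_not_lt fun h => ?_).symm⟩
    exact (S.isProfile.notMem_blackCell_of_isComponentIoo hc ⟨k, by omega⟩).1 ⟨h, hsi.2⟩

theorem exists_component (S : IsFrame δ r E G vB vW) (hP : P ⊆ blackRadii δ r E G vB vW)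
    (hx : x ∈ blackUnion r E P) : ∃ s t, IsComponentIoo (blackUnion r E P) s t ∧ x ∈ Ioo s t := by
  have hreach : ∀ p ∈ P, p.1 + p.2 ≤ E (2 * r) := fun p hp => not_lt.1 fun h => by
    have := (hP hp).2.apply_lt_right S.isProfile.isMassFunction S.pos_delta.le S.delta_lt h
    linarith [S.isProfile.right (E (2 * r)) self_mem_Ici (p.1 + p.2) h.le]
  have hbounds : ∀ y ∈ blackUnion r E P, y ∈ Ioo (2 * E 0 - E (2 * r)) (E (2 * r)) := by
    intro y hy
    rcases mem_absorb.1 hy with hyP | ⟨k, -, hyk⟩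
    · obtain ⟨p, hp, hyp⟩ := mem_balls.1 hyP
      have := hreach p hp
      have := (hP hp).1.2.1
      have := S.first_le_black
      exact ⟨by linarith [hyp.1], by linarith [hyp.2]⟩
    · have h₁ := S.isProfile.le (i := 0) (j := 2 * k + 1) (by omega) (by omega)
      have h₂ := S.isProfile.le (i := 2 * k + 2) (j := 2 * r) (by omega) le_rfl
      exact ⟨by linarith [hyk.1, hyk.2], by linarith [hyk.2]⟩
  exact exists_isComponentIoo isOpen_blackUnion hx (hbounds x hx).1.le
    (fun h => (hbounds _ h).1.false) (hbounds x hx).2.le fun h => (hbounds _ h).2.false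

/- The interval of `P` around `E 0` would have a centre to the right of `vB` which satisfies the
defining property of `vB`. -/
theorem first_le_of_component (S : IsFrame δ r E G vB vW) (hP : P ⊆ blackRadii δ r E G vB vW)
    (hc : IsComponentIoo (blackUnion r E P) s (E (2 * r))) : E 0 ≤ s := by
  by_contra! hs
  have h0 : E 0 ∈ Ioo s (E (2 * r)) := ⟨hs, S.isProfile.lt (by have := S.pos; omega) le_rfl⟩
  obtain ⟨p, hp, h0p⟩ := S.isProfile.exists_endpoint_mem_ball (Nat.zero_le _) (hc.subset h0)
  obtain ⟨⟨⟨i, hi, hip⟩, hBp, -⟩, hradius⟩ := hP hp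
  have hreach := (ball_subset_component hc hp h0p h0).2
  have htail := S.mul_le_sub_apply_of_component hP hc (x := p.1 + p.2)
    ⟨by linarith [h0p.2], hreach⟩
  have hhead := S.isProfile.left (p.1 - p.2) h0p.1.le (E 0) self_mem_Iic
  have hmass := hradius.le_ballMass
  rw [ballMass] at hmass
  have := S.le_black i hi (by rw [hip]; linarith [h0p.1]) (by rw [hip]; linarith)
  linarith

theorem exists_white_center_mem (S : IsFrame δ r E G vB vW) (hQ : Q ⊆ whiteRadii δ r E G vB vW)
    (hc : IsComponentIoo (whiteUnion r E Q) s t) : ∃ q ∈ Q, q.1 ∈ Ioo s t := by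
  obtain ⟨p, hp, hpt⟩ := S.dual.exists_center_mem (negCenters_subset_blackRadii hQ)
    (hc.neg fun _ => neg_mem_blackUnion_dual)
  exact ⟨(-p.1, p.2), hp, by dsimp only; linarith [hpt.2], by dsimp only; linarith [hpt.1]⟩

theorem left_eq_of_white_component (S : IsFrame δ r E G vB vW)
    (hQ : Q ⊆ whiteRadii δ r E G vB vW) (hc : IsComponentIoo (whiteUnion r E Q) s t) :
    ∃ k < r, s = E (2 * k) := by
  obtain ⟨k, hk, h⟩ := S.dual.right_eq_of_component (negCenters_subset_blackRadii hQ)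
    (hc.neg fun _ => neg_mem_blackUnion_dual)
  rw [dualEndpoints, show 2 * r - (2 * k + 2) = 2 * (r - 1 - k) by omega] at h
  exact ⟨r - 1 - k, by omega, neg_injective h⟩

theorem right_eq_of_white_component (S : IsFrame δ r E G vB vW)
    (hQ : Q ⊆ whiteRadii δ r E G vB vW) (hc : IsComponentIoo (whiteUnion r E Q) s t) :
    E (2 * r) < t ∨ ∃ k < r, t = E (2 * k + 1) := by
  refine (S.dual.left_eq_of_component (negCenters_subset_blackRadii hQ)
    (hc.neg fun _ => neg_mem_blackUnion_dual)).imp (fun h => ?_) fun ⟨k, hk, h⟩ => ?_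
  · simpa [dualEndpoints] using h
  · rw [dualEndpoints, show 2 * r - (2 * k + 1) = 2 * (r - 1 - k) + 1 by omega] at h
    exact ⟨r - 1 - k, by omega, neg_injective h⟩

theorem exists_white_component (S : IsFrame δ r E G vB vW) (hQ : Q ⊆ whiteRadii δ r E G vB vW)
    (hx : x ∈ whiteUnion r E Q) : ∃ s t, IsComponentIoo (whiteUnion r E Q) s t ∧ x ∈ Ioo s t := by
  obtain ⟨s, t, hc, hxs, hxt⟩ := S.dual.exists_component (negCenters_subset_blackRadii hQ)
    (neg_mem_blackUnion_dual.2 hx)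
  refine ⟨-t, -s, hc.neg fun y => ?_, by linarith, by linarith⟩
  rw [← neg_mem_blackUnion_dual, neg_neg]

theorem le_last_of_white_component (S : IsFrame δ r E G vB vW)
    (hQ : Q ⊆ whiteRadii δ r E G vB vW) (hc : IsComponentIoo (whiteUnion r E Q) (E 0) t) :
    t ≤ E (2 * r) := by
  have := S.dual.first_le_of_component (negCenters_subset_blackRadii hQ) (s := -t)
    (by simpa [dualEndpoints] using hc.neg fun _ => neg_mem_blackUnion_dual)
  simpa [dualEndpoints] using this

end IsFrame

end Frame

/-! ### Components cannot overlap partially -/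

section Overlap

variable {δ vB vW s t u v x w : ℝ} {r : ℕ} {E : ℕ → ℝ} {G : ℝ → ℝ} {P Q : Set (ℝ × ℝ)}

namespace IsFrame

/- Left of `vB` the black interval around `u` unbalances the truncation, right of `vW` the white
interval around `t` does, and the endpoints in between bring their own witnesses. -/
theorem isUnbalanced_truncate (S : IsFrame δ r E G vB vW) (hPQ : IsCover δ r E G vB vW P Q)
    (hB : IsComponentIoo (blackUnion r E P) s t) (hW : IsComponentIoo (whiteUnion r E Q) u v)
    (hsu : s < u) (htv : t < v) (hx : x ∈ E '' Iic (2 * r)) (hxut : x ∈ Icc u t) (hut : u < t) :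
    IsUnbalanced δ (truncate G u t) x := by
  have hG := S.isProfile.isMassFunction
  obtain ⟨i, hi, ht⟩ := S.right_eq_of_component hPQ.black hB
  obtain ⟨j, hj, hu⟩ := S.left_eq_of_white_component hPQ.white hW
  rcases le_or_gt x vB with hxB | hxB
  · obtain ⟨p, hp, hup⟩ := S.isProfile.exists_endpoint_mem_ball (P := P)
      (i := 2 * j) (by omega) (hu ▸ hB.subset ⟨hsu, hut⟩)
    rw [← hu] at hup
    exact (hPQ.black hp).2.isUnbalanced_truncate hG S.pos_delta hxut.1
      (hxB.trans_lt (hPQ.black hp).1.2.1) hup.1 (ball_subset_component hB hp hup ⟨hsu, hut⟩).2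
  rcases le_or_gt vW x with hxW | hxW
  · obtain ⟨q, hq, htq⟩ := S.isProfile.exists_endpoint_mem_white_ball (Q := Q)
      (i := 2 * i + 2) (by omega) (ht ▸ hW.subset ⟨hut, htv⟩)
    rw [← ht] at htq
    exact (hPQ.white hq).2.isUnbalanced_truncate hG S.pos_delta hxut.2
      ((hPQ.white hq).1.2.2.trans_le hxW) htq.2 (ball_subset_component hW hq htq ⟨hut, htv⟩).1
  rcases hPQ.exists_witness x ⟨hx, hxB, hxW⟩ with ⟨ρ, hρ, hwit⟩ | ⟨ρ, hρ, hwit⟩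
  · refine hwit.isUnbalanced_truncate hG hxut.1 (not_lt.1 fun h => hB.right_notMem ?_)
    exact subset_absorb (Ioo_subset_balls hρ ⟨by linarith [hwit.1, hxut.2], h⟩)
  · refine hwit.isUnbalanced_truncate hG hxut.2 (not_lt.1 fun h => hW.left_notMem ?_)
    exact subset_absorb (Ioo_subset_balls hρ ⟨h, by linarith [hwit.1, hxut.1]⟩)

theorem white_right_le_of_overlap (S : IsFrame δ r E G vB vW) (hPQ : IsCover δ r E G vB vW P Q)
    (hB : IsComponentIoo (blackUnion r E P) s t) (hW : IsComponentIoo (whiteUnion r E Q) u v)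
    (hsu : s < u) (hut : u < t) : v ≤ t := by
  by_contra! htv
  have hunbalanced := fun x hx hxut =>
    S.isUnbalanced_truncate hPQ hB hW hsu htv (x := x) hx hxut hut
  obtain ⟨i, hi, rfl⟩ := S.right_eq_of_component hPQ.black hB
  obtain ⟨j, hj, rfl⟩ := S.left_eq_of_white_component hPQ.white hW
  have hji := (S.isProfile.lt_iff_lt (by omega) (by omega)).1 hut
  rcases lt_or_ge (i + 1 - j) r with hn | hn
  · obtain ⟨m, hm, hbalanced⟩ := S.minimal _ hn _ _
      (S.isProfile.truncate (j := j) (i := i + 1) (by omega) (by omega))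
    exact hbalanced (hunbalanced _ (mem_image_of_mem E (show 2 * j + m ≤ 2 * r by omega))
      ⟨S.isProfile.le (by omega) (by omega), S.isProfile.le (by omega) (by omega)⟩)
  · obtain rfl : j = 0 := by omega
    rw [show 2 * i + 2 = 2 * r by omega] at hB
    exact (S.first_le_of_component hPQ.black hB).not_gt hsu

theorem isUnbalanced_truncate_reverse (S : IsFrame δ r E G vB vW)
    (hPQ : IsCover δ r E G vB vW P Q) (hB : IsComponentIoo (blackUnion r E P) s t)
    (hW : IsComponentIoo (whiteUnion r E Q) u v) {k l : ℕ} (hk : k < r) (hl : l < r)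
    (hs : s = E (2 * k + 1)) (hv : v = E (2 * l + 1)) (hus : u < s) (hsv : s < v) (hvt : v < t)
    (hx : x ∈ E '' Iic (2 * r)) (hxsv : x ∈ Icc s v) :
    IsUnbalanced δ (truncate (reverse G) (-v) (-s)) (-x) := by
  have hG := S.isProfile.isMassFunction.reverse
  rcases le_or_gt x vB with hxB | hxB
  · obtain ⟨q, hq, hsq⟩ := S.isProfile.exists_endpoint_mem_white_ball (Q := Q)
      (i := 2 * k + 1) (by omega) (hs ▸ hW.subset ⟨hus, hsv⟩)
    rw [← hs] at hsq
    have := (hPQ.white hq).1.2.1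
    have := (ball_subset_component hW hq hsq ⟨hus, hsv⟩).2
    exact (isWhiteRadius_reverse_neg.2 (hPQ.white hq).2).isUnbalanced_truncate hG S.pos_delta
      (neg_le_neg hxsv.1) (by linarith) (by linarith [hsq.1]) (by linarith)
  rcases le_or_gt vW x with hxW | hxW
  · obtain ⟨p, hp, hvp⟩ := S.isProfile.exists_endpoint_mem_ball (P := P)
      (i := 2 * l + 1) (by omega) (hv ▸ hB.subset ⟨hsv, hvt⟩)
    rw [← hv] at hvp
    have := (hPQ.black hp).1.2.2
    have := (ball_subset_component hB hp hvp ⟨hsv, hvt⟩).1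
    exact (isBlackRadius_reverse_neg.2 (hPQ.black hp).2).isUnbalanced_truncate hG S.pos_delta
      (neg_le_neg hxsv.2) (by linarith) (by linarith [hvp.2]) (by linarith)
  rcases hPQ.exists_witness x ⟨hx, hxB, hxW⟩ with ⟨ρ, hρ, hwit⟩ | ⟨ρ, hρ, hwit⟩
  · have hsx : s ≤ x - ρ := not_lt.1 fun h => hB.left_notMem <|
      subset_absorb (Ioo_subset_balls hρ ⟨h, by linarith [hwit.1, hxsv.1]⟩)
    exact (isBlackWitness_reverse_neg.2 hwit).isUnbalanced_truncate hG (neg_le_neg hxsv.2)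
      (by linarith)
  · have hxv : x + ρ ≤ v := not_lt.1 fun h => hW.right_notMem <|
      subset_absorb (Ioo_subset_balls hρ ⟨by linarith [hwit.1, hxsv.2], h⟩)
    exact (isWhiteWitness_reverse_neg.2 hwit).isUnbalanced_truncate hG (neg_le_neg hxsv.1)
      (by linarith)

theorem black_right_le_of_overlap (S : IsFrame δ r E G vB vW) (hPQ : IsCover δ r E G vB vW P Q)
    (hB : IsComponentIoo (blackUnion r E P) s t) (hW : IsComponentIoo (whiteUnion r E Q) u v)
    (hus : u < s) (hsv : s < v) : t ≤ v := by
  by_contra! hvt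
  obtain ⟨i, hi, ht⟩ := S.right_eq_of_component hPQ.black hB
  obtain ⟨j, hj, hu⟩ := S.left_eq_of_white_component hPQ.white hW
  obtain ⟨k, hk, hs⟩ := (S.left_eq_of_component hPQ.black hB).resolve_left fun h => by
    linarith [S.isProfile.le (i := 0) (j := 2 * j) (by omega) (by omega)]
  obtain ⟨l, hl, hv⟩ := (S.right_eq_of_white_component hPQ.white hW).resolve_left fun h => by
    linarith [S.isProfile.le (i := 2 * i + 2) (j := 2 * r) (by omega) le_rfl]
  have hunbalanced := fun x hx hxsv =>
    S.isUnbalanced_truncate_reverse hPQ hB hW hk hl hs hv hus hsv hvt (x := x) hx hxsv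
  rw [hs, hv] at hunbalanced
  have hkl := (S.isProfile.lt_iff_lt (by omega) (by omega)).1 (hs ▸ hv ▸ hsv)
  obtain ⟨m, hm, hbalanced⟩ := S.minimal (l - k) (by omega) _ _
    (S.isProfile.truncate_reverse (j := k) (i := l) (by omega) hl)
  exact hbalanced (hunbalanced _ (mem_image_of_mem E (show 2 * l + 1 - m ≤ 2 * r by omega))
    ⟨S.isProfile.le (by omega) (by omega), S.isProfile.le (by omega) (by omega)⟩)

end IsFrame

/-! ### Merging the initial cells -/

theorem IsBlackWitness.isUnbalanced_of_eqOn {G' : ℝ → ℝ} {ρ : ℝ} (h : IsBlackWitness δ G x ρ)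
    (hGG' : EqOn G' G (Ici (x - ρ))) : IsUnbalanced δ G' x := by
  have heq : ∀ ω > 0, ω ≤ ρ → ballMass G' x ω = ballMass G x ω := fun ω hω hωρ => by
    rw [ballMass, ballMass, hGG' (show x - ρ ≤ x + ω by linarith),
      hGG' (show x - ρ ≤ x - ω by linarith)]
  obtain ⟨hρ, hstrict | ⟨-, ω, hω, hωρ, hwhite⟩⟩ := h
  · exact ⟨ρ, hρ, Or.inr (by rwa [heq ρ hρ le_rfl])⟩
  · exact ⟨ω, hω, Or.inl (by rwa [heq ω hω hωρ.le])⟩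

theorem IsWhiteWitness.isUnbalanced_of_eqOn {G' : ℝ → ℝ} {ρ : ℝ} (h : IsWhiteWitness δ G x ρ)
    (hGG' : EqOn G' G (Ici (x - ρ))) : IsUnbalanced δ G' x := by
  have heq : ∀ ω > 0, ω ≤ ρ → ballMass G' x ω = ballMass G x ω := fun ω hω hωρ => by
    rw [ballMass, ballMass, hGG' (show x - ρ ≤ x + ω by linarith),
      hGG' (show x - ρ ≤ x - ω by linarith)]
  obtain ⟨hρ, hstrict | ⟨-, ω, hω, hωρ, hblack⟩⟩ := h
  · exact ⟨ρ, hρ, Or.inl (by rwa [heq ρ hρ le_rfl])⟩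
  · exact ⟨ω, hω, Or.inr (by rwa [heq ω hω hωρ.le])⟩

theorem IsProfile.exists_merge_point (h : IsProfile r E G) (hδ : 0 < δ) (hδ2 : δ < 1 / 2) {k : ℕ}
    (hk0 : 0 < k) (hk : k < r) (hw : w ∈ Icc (E (2 * k)) (E (2 * k + 1))) :
    ∃ c < E (2 * k), G w - G (E 0) < c - E 0 ∧ 2 * δ * (c - E 0) < G w - G (E 0) := by
  have hG := h.isMassFunction
  have hfirst := h.white (k := 0) (by omega) (E 0) ⟨le_rfl, h.le (by omega) (by omega)⟩ (E 1)
    ⟨h.le (by omega) (by omega), le_rfl⟩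
  have hpos : 0 < G w - G (E 0) := by
    have hblack := h.black (k := 0) (by omega) (E 1) ⟨le_rfl, h.le (by omega) (by omega)⟩ (E 2)
      ⟨h.le (by omega) (by omega), le_rfl⟩
    have := h.lt (i := 1) (j := 2) (by omega) (by omega)
    linarith [hG.mono ((h.le (i := 2) (j := 2 * k) (by omega) (by omega)).trans hw.1)]
  have hlt : G w - G (E 0) < E (2 * k) - E 0 := by
    have := h.lt (i := 0) (j := 1) (by omega) (by omega)
    have := hG.sub_le (h.le (i := 1) (j := 2 * k) (by omega) (by omega))
    linarith [h.white hk (E (2 * k)) ⟨le_rfl, hw.1.trans hw.2⟩ w hw]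
  have hlt' : G w - G (E 0) < (G w - G (E 0)) / (2 * δ) := by
    rw [lt_div_iff₀ (by linarith)]
    nlinarith
  obtain ⟨d, hd, hd'⟩ := exists_between (lt_min hlt hlt')
  have hdδ := hd'.trans_le (min_le_right _ _)
  rw [lt_div_iff₀ (by linarith)] at hdδ
  have := hd'.trans_le (min_le_left _ _)
  exact ⟨E 0 + d, by linarith, by linarith, by linarith⟩

namespace IsFrame

variable {c : ℝ}

theorem isUnbalanced_merge_of_le (S : IsFrame δ r E G vB vW) (h0c : E 0 ≤ c) (hcw : c ≤ w)
    (hwr : w ≤ E (2 * r)) (hc : G w - G (E 0) < c - E 0) (hxB : x ≤ vB) :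
    IsUnbalanced δ (merge G c w) x := by
  have hpos := S.isProfile.lt (i := 0) (by have := S.pos; omega) le_rfl
  have := S.black_le_mid
  refine ⟨E (2 * r) - x, by linarith, Or.inr ?_⟩
  rw [ballMass, add_sub_cancel, merge_of_ge hcw hwr, merge_of_le hcw (by linarith)]
  nlinarith [S.black_le_mass, S.pos_delta]

theorem isUnbalanced_merge_of_ge (S : IsFrame δ r E G vB vW) (hcw : c < w)
    (hc : 2 * δ * (c - E 0) < G w - G (E 0)) (hwx : w ≤ x) (hxW : vW ≤ x) :
    IsUnbalanced δ (merge G c w) x := by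
  refine ⟨x - c, by linarith, Or.inl ?_⟩
  rw [ballMass, sub_sub_cancel, merge_of_ge hcw.le (by linarith), merge_of_le hcw.le le_rfl]
  have hright : G (x + (x - c)) ≤ G (E (2 * r)) := by
    rcases le_total (x + (x - c)) (E (2 * r)) with h | h
    · exact S.isProfile.isMassFunction.mono h
    · linarith [S.isProfile.right (E (2 * r)) self_mem_Ici (x + (x - c)) h]
  nlinarith [S.mass_le_white, S.pos_delta]

/- Replacing the part of the profile left of `w` by a single white cell, starting at a point `c`
with `G w - G (E 0) < c - E 0 < (G w - G (E 0)) / (2 δ)`, keeps the endpoints unbalanced. -/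
theorem mem_balls_union_balls_of_le (S : IsFrame δ r E G vB vW) (hPQ : IsCover δ r E G vB vW P Q)
    {k : ℕ} (hk0 : 0 < k) (hk : k < r) (hw : w ∈ Icc (E (2 * k)) (E (2 * k + 1))) (hwB : w ≤ vB) :
    w ∈ balls P ∪ balls Q := by
  by_contra hwPQ
  have hfree : ∀ p : ℝ × ℝ, p ∈ P ∨ p ∈ Q → w ≤ p.1 → 0 < p.2 → w ≤ p.1 - p.2 :=
    fun p hp hwp hpos => not_lt.1 fun h => hwPQ <| hp.imp
      (fun hp => Ioo_subset_balls hp ⟨h, by linarith⟩)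
      (fun hp => Ioo_subset_balls hp ⟨h, by linarith⟩)
  obtain ⟨c, hcE, hc, hcδ⟩ := S.isProfile.exists_merge_point S.pos_delta S.delta_lt hk0 hk hw
  have hcw : c < w := hcE.trans_le hw.1
  have h0w : G (E 0) ≤ G w := S.isProfile.isMassFunction.mono
    ((S.isProfile.le (Nat.zero_le _) (by omega)).trans hw.1)
  have hwr : w ≤ E (2 * r) := hw.2.trans (S.isProfile.le (by omega) le_rfl)
  have hblack := fun x =>
    S.isUnbalanced_merge_of_le (x := x) (by linarith) hcw.le hwr hc
  obtain ⟨m, hm, hbalanced⟩ := S.minimal _ (by omega) _ _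
    (S.isProfile.merge hk hw hcw.le (by linarith [hw.2]))
  refine hbalanced ?_
  rcases Nat.eq_zero_or_pos m with rfl | hm0
  · simpa using hblack c (by linarith)
  rw [if_neg hm0.ne']
  have hwx : w ≤ E (2 * k + m) := hw.2.trans (S.isProfile.le (by omega) (by omega))
  rcases le_or_gt (E (2 * k + m)) vB with hxB | hxB
  · exact hblack _ hxB
  rcases le_or_gt vW (E (2 * k + m)) with hxW | hxW
  · exact S.isUnbalanced_merge_of_ge hcw hcδ hwx hxW
  have heq : EqOn (merge G c w) G (Ici w) := fun y hy => merge_of_ge hcw.le hy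
  rcases hPQ.exists_witness _ ⟨mem_image_of_mem E (show 2 * k + m ≤ 2 * r by omega), hxB, hxW⟩
    with ⟨ρ, hρ, hwit⟩ | ⟨ρ, hρ, hwit⟩
  · exact hwit.isUnbalanced_of_eqOn (heq.mono (Ici_subset_Ici.2 (hfree _ (.inl hρ) hwx hwit.1)))
  · exact hwit.isUnbalanced_of_eqOn (heq.mono (Ici_subset_Ici.2 (hfree _ (.inr hρ) hwx hwit.1)))

theorem mem_balls_union_balls_of_ge (S : IsFrame δ r E G vB vW) (hPQ : IsCover δ r E G vB vW P Q)
    {l : ℕ} (hl : l + 1 < r) (hw : w ∈ Icc (E (2 * l + 1)) (E (2 * l + 2))) (hwW : vW ≤ w) :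
    w ∈ balls P ∪ balls Q := by
  have := S.dual.mem_balls_union_balls_of_le hPQ.dual (k := r - l - 1) (w := -w)
    (by omega) (by omega)
    (by
      simp only [dualEndpoints]
      rw [show 2 * r - 2 * (r - l - 1) = 2 * l + 2 by omega,
        show 2 * r - (2 * (r - l - 1) + 1) = 2 * l + 1 by omega]
      exact ⟨neg_le_neg hw.2, neg_le_neg hw.1⟩)
    (neg_le_neg hwW)
  rw [mem_union, neg_mem_balls_negCenters, neg_mem_balls_negCenters] at this
  exact this.symm

end IsFrame

end Overlap

/-! ### Nesting -/

section Nesting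

variable {δ vB vW s t u v : ℝ} {r : ℕ} {E : ℕ → ℝ} {G : ℝ → ℝ} {P P' Q Q' : Set (ℝ × ℝ)}

theorem IsCover.le_or_le_of_notMem (hPQ : IsCover δ r E G vB vW P Q) {i : ℕ} (hi : i ≤ 2 * r)
    (hP : E i ∉ balls P) (hQ : E i ∉ balls Q) : E i ≤ vB ∨ vW ≤ E i := by
  by_contra! h
  rcases hPQ.exists_witness _ ⟨mem_image_of_mem E hi, h⟩ with ⟨ρ, hρ, hwit⟩ | ⟨ρ, hρ, hwit⟩
  · exact hP (Ioo_subset_balls hρ ⟨sub_lt_self _ hwit.1, lt_add_of_pos_right _ hwit.1⟩)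
  · exact hQ (Ioo_subset_balls hρ ⟨sub_lt_self _ hwit.1, lt_add_of_pos_right _ hwit.1⟩)

namespace IsFrame

theorem eq_of_white_component_of_notMem (S : IsFrame δ r E G vB vW)
    (hPQ : IsCover δ r E G vB vW P Q) (hW : IsComponentIoo (whiteUnion r E Q) u v)
    (hu : u ∉ blackUnion r E P) (hv : v ∉ blackUnion r E P) : u = E 0 ∧ v = E (2 * r - 1) := by
  obtain ⟨q, hq, hquv⟩ := S.exists_white_center_mem hPQ.white hW
  obtain ⟨-, hBq, hqW⟩ := (hPQ.white hq).1
  have huP := fun h => hu (subset_absorb h)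
  have huQ := fun h => hW.left_notMem (subset_absorb h)
  have hvP := fun h => hv (subset_absorb h)
  have hvQ := fun h => hW.right_notMem (subset_absorb h)
  obtain ⟨j, hj, rfl⟩ := S.left_eq_of_white_component hPQ.white hW
  obtain rfl : j = 0 := by
    by_contra hj0
    have huB := (hPQ.le_or_le_of_notMem (by omega) huP huQ).resolve_right
      (by linarith [hquv.1])
    exact (S.mem_balls_union_balls_of_le hPQ (Nat.pos_of_ne_zero hj0) hj
      ⟨le_rfl, S.isProfile.le (by omega) (by omega)⟩ huB).elim huP huQ
  refine ⟨rfl, ?_⟩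
  obtain ⟨l, hl, rfl⟩ := (S.right_eq_of_white_component hPQ.white hW).resolve_left
    (S.le_last_of_white_component hPQ.white hW).not_gt
  obtain rfl : l = r - 1 := by
    by_contra hlr
    have hvW := (hPQ.le_or_le_of_notMem (by omega) hvP hvQ).resolve_left
      (by linarith [hquv.2])
    exact (S.mem_balls_union_balls_of_ge hPQ (by omega)
      ⟨le_rfl, S.isProfile.le (by omega) (by omega)⟩ hvW).elim hvP hvQ
  congr 1
  omega

theorem left_notMem_of_overlap (S : IsFrame δ r E G vB vW) (hPQ : IsCover δ r E G vB vW P Q)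
    (hB : IsComponentIoo (blackUnion r E P) s t) (hW : IsComponentIoo (whiteUnion r E Q) u v)
    (hus : u ≤ s) (htv : t ≤ v) : u ∉ blackUnion r E P := by
  intro hu
  obtain ⟨s', t', hB', hu'⟩ := S.exists_component hPQ.black hu
  have hvt' := S.white_right_le_of_overlap hPQ hB' hW hu'.1 hu'.2
  obtain ⟨x, hx⟩ := nonempty_Ioo.2 hB.lt
  have := (hB.eq_and_eq hB' hx ⟨by linarith [hu'.1, hx.1], by linarith [hx.2]⟩).1
  linarith [hu'.1]

theorem right_notMem_of_overlap (S : IsFrame δ r E G vB vW) (hPQ : IsCover δ r E G vB vW P Q)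
    (hB : IsComponentIoo (blackUnion r E P) s t) (hW : IsComponentIoo (whiteUnion r E Q) u v)
    (hus : u ≤ s) (htv : t ≤ v) : v ∉ blackUnion r E P := by
  intro hv
  obtain ⟨s', t', hB', hv'⟩ := S.exists_component hPQ.black hv
  have hs'u : s' ≤ u := not_lt.1 fun h =>
    (S.black_right_le_of_overlap hPQ hB' hW h hv'.1).not_gt hv'.2
  obtain ⟨x, hx⟩ := nonempty_Ioo.2 hB.lt
  have := (hB.eq_and_eq hB' hx ⟨by linarith [hx.1], by linarith [hv'.2, hx.2]⟩).2
  linarith [hv'.2]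

theorem white_subset_or_exceptional (S : IsFrame δ r E G vB vW)
    (hPQ : IsCover δ r E G vB vW P Q)
    (hB : IsComponentIoo (blackUnion r E P) s t) (hW : IsComponentIoo (whiteUnion r E Q) u v)
    (hsv : s < v) (hut : u < t) :
    (s ≤ u ∧ v ≤ t) ∨ (u = E 0 ∧ v = E (2 * r - 1) ∧ u ≤ s ∧ t ≤ v) := by
  refine or_iff_not_imp_left.2 fun hnot => ?_
  obtain ⟨hus, htv⟩ : u ≤ s ∧ t ≤ v := by
    rcases lt_or_ge s u with hsu | hus
    · exact absurd ⟨hsu.le, S.white_right_le_of_overlap hPQ hB hW hsu hut⟩ hnot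
    rcases hus.eq_or_lt with rfl | hus'
    · exact ⟨le_rfl, not_lt.1 fun h => hnot ⟨le_rfl, h.le⟩⟩
    · exact ⟨hus, S.black_right_le_of_overlap hPQ hB hW hus' hsv⟩
  obtain ⟨hu, hv⟩ := S.eq_of_white_component_of_notMem hPQ hW
    (S.left_notMem_of_overlap hPQ hB hW hus htv) (S.right_notMem_of_overlap hPQ hB hW hus htv)
  exact ⟨hu, hv, hus, htv⟩

theorem exists_component_superset (S : IsFrame δ r E G vB vW) (hPP' : P ⊆ P')
    (hP' : P' ⊆ blackRadii δ r E G vB vW) (hB : IsComponentIoo (blackUnion r E P) s t) :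
    ∃ s' t', IsComponentIoo (blackUnion r E P') s' t' ∧ s' ≤ s ∧ t ≤ t' := by
  have hmono : blackUnion r E P ⊆ blackUnion r E P' :=
    absorb_mono (biUnion_subset_biUnion_left hPP')
  obtain ⟨x, hx⟩ := nonempty_Ioo.2 hB.lt
  obtain ⟨s', t', hB', hx'⟩ := S.exists_component hP' (hmono (hB.subset hx))
  exact ⟨s', t', hB', hB'.le_and_le_of_Ioo_subset (hB.subset.trans hmono) hx hx'⟩

theorem exists_white_component_superset (S : IsFrame δ r E G vB vW) (hQQ' : Q ⊆ Q')
    (hQ' : Q' ⊆ whiteRadii δ r E G vB vW) (hW : IsComponentIoo (whiteUnion r E Q) u v) :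
    ∃ u' v', IsComponentIoo (whiteUnion r E Q') u' v' ∧ u' ≤ u ∧ v ≤ v' := by
  have hmono : whiteUnion r E Q ⊆ whiteUnion r E Q' :=
    absorb_mono (biUnion_subset_biUnion_left hQQ')
  obtain ⟨x, hx⟩ := nonempty_Ioo.2 hW.lt
  obtain ⟨u', v', hW', hx'⟩ := S.exists_white_component hQ' (hmono (hW.subset hx))
  exact ⟨u', v', hW', hW'.le_and_le_of_Ioo_subset (hW.subset.trans hmono) hx hx'⟩

/- If neither containment holds, both components lie in exceptional components of the unions over
all extremal radii, and those two overlap partially. -/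
theorem subset_or_subset (S : IsFrame δ r E G vB vW)
    (hP : IsCover δ r E G vB vW P (whiteRadii δ r E G vB vW))
    (hQ : IsCover δ r E G vB vW (blackRadii δ r E G vB vW) Q)
    (hB : IsComponentIoo (blackUnion r E P) s t) (hW : IsComponentIoo (whiteUnion r E Q) u v)
    (hsv : s < v) (hut : u < t) : (s ≤ u ∧ v ≤ t) ∨ (u ≤ s ∧ t ≤ v) := by
  have hfull : IsCover δ r E G vB vW (blackRadii δ r E G vB vW) (whiteRadii δ r E G vB vW) :=
    ⟨subset_rfl, subset_rfl, fun x hx => (hP.exists_witness x hx).imp_left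
      fun ⟨ρ, hρ, hwit⟩ => ⟨ρ, hP.black hρ, hwit⟩⟩
  obtain ⟨u', v', hW', hu', hv'⟩ := S.exists_white_component_superset hQ.white subset_rfl hW
  obtain ⟨s', t', hB', hs', ht'⟩ := S.exists_component_superset hP.black subset_rfl hB
  rcases S.white_subset_or_exceptional hP hB hW' (by linarith) (by linarith)
    with h | ⟨hu'0, hv'r, _, _⟩
  · exact .inl ⟨by linarith, by linarith⟩
  rcases S.dual.white_subset_or_exceptional hQ.dual (hW.neg fun _ => neg_mem_blackUnion_dual)
    (hB'.neg fun _ => neg_mem_whiteUnion_dual) (by linarith) (by linarith)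
    with h | ⟨ht'r, hs'1, -, -⟩
  · exact .inr ⟨by linarith, by linarith⟩
  have hr := S.pos
  simp only [dualEndpoints, Nat.sub_zero, neg_inj] at ht'r
  rw [dualEndpoints, neg_inj, Nat.sub_sub_self (by omega)] at hs'1
  have hr1 : 1 < r := by
    by_contra hr1
    obtain rfl : r = 1 := by omega
    obtain ⟨k, hk, ht⟩ := S.right_eq_of_component hP.black hB
    obtain rfl : k = 0 := by omega
    linarith [S.isProfile.lt (i := 1) (j := 2) (by omega) le_rfl]
  have := S.isProfile.lt (i := 0) (j := 1) (by omega) (by omega)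
  have := S.isProfile.lt (i := 1) (j := 2 * r - 1) (by omega) (by omega)
  have := S.isProfile.lt (i := 2 * r - 1) (j := 2 * r) (by omega) (by omega)
  linarith [S.black_right_le_of_overlap hfull hB' hW' (by linarith) (by linarith)]

end IsFrame

end Nesting

/-! ### Existence of extremal radii -/

/-- The radii `ω > 0` for which the interval of radius `ω` about `x` has density outside
`(δ, 1 - δ)`; the greatest one is `ω(x)` in the paper. -/
def extremeRadii (δ : ℝ) (G : ℝ → ℝ) (x : ℝ) : Set ℝ :=
  {ω | 0 < ω ∧ (ballMass G x ω ≤ 2 * δ * ω ∨ 2 * (1 - δ) * ω ≤ ballMass G x ω)}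

section ExtremalRadii

variable {δ m x ν ω ρ : ℝ} {n : ℕ} {e : ℕ → ℝ} {G : ℝ → ℝ}

theorem extremeRadii_dual_neg (δ : ℝ) (G : ℝ → ℝ) (x : ℝ) :
    extremeRadii δ (dual G) (-x) = extremeRadii δ G x := by
  ext ω
  refine and_congr_right fun _ => ?_
  rw [ballMass_dual_neg, or_comm]
  refine or_congr ⟨fun h => ?_, fun h => ?_⟩ ⟨fun h => ?_, fun h => ?_⟩ <;> linarith

theorem IsMassFunction.ballMass_mem_Icc (hG : IsMassFunction G) (hω : 0 ≤ ω) :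
    ballMass G x ω ∈ Icc 0 (2 * ω) := by
  have hle : x - ω ≤ x + ω := by linarith
  have := hG.sub_le hle
  exact ⟨sub_nonneg.2 (hG.mono hle), by rw [ballMass]; linarith⟩

theorem IsMassFunction.continuous_ballMass (hG : IsMassFunction G) (x : ℝ) :
    Continuous (ballMass G x) :=
  (hG.continuous.comp (continuous_const_add x)).sub (hG.continuous.comp (continuous_sub_left x))

theorem IsUnbalanced.pos_delta (h : IsUnbalanced δ G x) (hG : IsMassFunction G) : 0 < δ := by
  obtain ⟨ω, hω, h⟩ := h
  have := hG.ballMass_mem_Icc (x := x) hω.le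
  by_contra! hδ
  rcases h with h | h <;> nlinarith [this.1, this.2]

theorem IsBlackRadius.isBlackWitness (h : IsBlackRadius δ G x ρ) (hν : 0 < ν)
    (hblack : 2 * (1 - δ) * ν < ballMass G x ν) : IsBlackWitness δ G x ρ := by
  refine ⟨h.pos, Or.inl (lt_of_mul_lt_mul_right ?_ hν.le)⟩
  calc 2 * (1 - δ) * ρ * ν = 2 * (1 - δ) * ν * ρ := by ring
    _ < ballMass G x ν * ρ := mul_lt_mul_of_pos_right hblack h.pos
    _ ≤ ballMass G x ρ * ν := h.extremal ν hν

namespace IsProfile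

theorem not_isUnbalanced_of_zero (h : IsProfile 0 e G) (hδ2 : δ < 1 / 2) :
    ¬IsUnbalanced δ G (e 0) := by
  rintro ⟨ω, hω, hunb⟩
  have hleft := h.left (e 0 - ω) (sub_le_self _ hω.le) (e 0) self_mem_Iic
  have hright := h.right (e 0) self_mem_Ici (e 0 + ω) (le_add_of_nonneg_right hω.le)
  have hmass : ballMass G (e 0) ω = ω := by
    rw [ballMass]
    linarith
  rw [hmass] at hunb
  rcases hunb with h | h <;> nlinarith

theorem exists_hasSlopeOn_right (h : IsProfile n e G) (x : ℝ) :
    ∃ c, ∃ ε > 0, HasSlopeOn G c (Icc x (x + ε)) := by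
  rcases lt_or_ge x (e 0) with h0 | h0
  · refine ⟨1, e 0 - x, sub_pos.2 h0, h.left.mono ?_⟩
    rw [add_sub_cancel]
    exact Icc_subset_Iic_self
  rcases lt_or_ge x (e (2 * n)) with hn | hn
  · obtain ⟨i, hi, hix, hxi⟩ := exists_mem_Ico_map_succ e h0 hn
    refine ⟨_, e (i + 1) - x, sub_pos.2 hxi, (h.cell i hi).mono ?_⟩
    rw [add_sub_cancel]
    exact Icc_subset_Icc_left hix
  · exact ⟨0, 1, one_pos, h.right.mono fun y hy => hn.trans hy.1⟩

theorem exists_hasSlopeOn_left (h : IsProfile n e G) (x : ℝ) :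
    ∃ c, ∃ ε > 0, HasSlopeOn G c (Icc (x - ε) x) := by
  obtain ⟨c, ε, hε, hc⟩ := h.dual.exists_hasSlopeOn_right (-x)
  have := hc.dual
  rw [dual_dual, neg_neg, neg_add, neg_neg, ← sub_eq_add_neg] at this
  exact ⟨_, ε, hε, this⟩

theorem exists_ballMass_eq_mul (h : IsProfile n e G) (x : ℝ) :
    ∃ c, ∃ ε > 0, ∀ ω ∈ Ioc 0 ε, ballMass G x ω = c * ω := by
  obtain ⟨c₁, ε₁, hε₁, h₁⟩ := h.exists_hasSlopeOn_left x
  obtain ⟨c₂, ε₂, hε₂, h₂⟩ := h.exists_hasSlopeOn_right x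
  refine ⟨c₁ + c₂, min ε₁ ε₂, lt_min hε₁ hε₂, fun ω ⟨hω, hle⟩ => ?_⟩
  rw [le_min_iff] at hle
  have hleft := h₁ (x - ω) ⟨by linarith, by linarith⟩ x ⟨by linarith, le_rfl⟩
  have hright := h₂ x ⟨le_rfl, by linarith⟩ (x + ω) ⟨by linarith, by linarith⟩
  rw [ballMass]
  linarith

theorem abs_sub_le (h : IsProfile n e G) (x : ℝ) :
    |G x - (G (e 0) + min (x - e 0) 0)| ≤ e (2 * n) - e 0 := by
  have hlen := h.le (Nat.zero_le _) le_rfl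
  have hmass := h.isMassFunction
  rcases le_total x (e 0) with h0 | h0
  · have := h.left x h0 (e 0) self_mem_Iic
    rw [min_eq_left (by linarith), abs_le]
    constructor <;> linarith
  rw [min_eq_right (by linarith), add_zero, abs_of_nonneg (sub_nonneg.2 (hmass.mono h0))]
  rcases le_total x (e (2 * n)) with hn | hn
  · linarith [hmass.sub_le h0]
  · linarith [h.right _ self_mem_Ici x hn, hmass.sub_le hlen]

theorem exists_abs_ballMass_sub_le (h : IsProfile n e G) (x : ℝ) :
    ∃ K, ∀ ω > 0, |ballMass G x ω - ω| ≤ K := by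
  refine ⟨2 * (e (2 * n) - e 0) + |x - e 0|, fun ω hω => ?_⟩
  have hright := abs_le.1 (h.abs_sub_le (x + ω))
  have hleft := abs_le.1 (h.abs_sub_le (x - ω))
  have hhalfLine : |min (x + ω - e 0) 0 - min (x - ω - e 0) 0 - ω| ≤ |x - e 0| := by
    rcases abs_cases (x - e 0) with ⟨habs, _⟩ | ⟨habs, _⟩ <;> rw [habs, abs_le] <;>
      rcases min_cases (x + ω - e 0) 0 with ⟨h₁, _⟩ | ⟨h₁, _⟩ <;>
      rcases min_cases (x - ω - e 0) 0 with ⟨h₂, _⟩ | ⟨h₂, _⟩ <;>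
      rw [h₁, h₂] <;> constructor <;> linarith
  rw [abs_le] at hhalfLine ⊢
  rw [ballMass]
  constructor <;> linarith

theorem exists_isGreatest_extremeRadii (h : IsProfile n e G) (hδ2 : δ < 1 / 2)
    (hx : IsUnbalanced δ G x) : ∃ m, IsGreatest (extremeRadii δ G x) m := by
  obtain ⟨ν, hν, hunb⟩ := hx
  have hνmem : ν ∈ extremeRadii δ G x := ⟨hν, hunb.imp le_of_lt le_of_lt⟩
  obtain ⟨K, hK⟩ := h.exists_abs_ballMass_sub_le x
  have hbdd : ∀ ω ∈ extremeRadii δ G x, ω ≤ K / (1 - 2 * δ) := fun ω ⟨hω, hext⟩ => by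
    rw [le_div_iff₀ (by linarith)]
    have := abs_le.1 (hK ω hω)
    rcases hext with hext | hext <;> linarith
  have hcont := h.isMassFunction.continuous_ballMass x
  have hclosed : IsClosed
      {ω | ballMass G x ω ≤ 2 * δ * ω ∨ 2 * (1 - δ) * ω ≤ ballMass G x ω} :=
    (isClosed_le hcont (continuous_const_mul _)).union (isClosed_le (continuous_const_mul _) hcont)
  obtain ⟨m, ⟨⟨hνm, -⟩, hm⟩, hmax⟩ :=
    (isCompact_Icc.inter_right hclosed).exists_isGreatest ⟨ν, ⟨le_rfl, hbdd ν hνmem⟩, hνmem.2⟩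
  refine ⟨m, ⟨hν.trans_le hνm, hm⟩, fun ω hω => ?_⟩
  rcases le_total ω ν with hων | hνω
  · exact hων.trans hνm
  · exact hmax ⟨⟨hνω, hbdd ω hω⟩, hω.2⟩

/- The density is constant for small radii and tends to `1/2 < 1 - δ` for large ones, so it attains
its maximum. -/
theorem exists_isBlackRadius (h : IsProfile n e G) (hδ2 : δ < 1 / 2) (hν : 0 < ν)
    (hblack : 2 * (1 - δ) * ν ≤ ballMass G x ν) : ∃ ρ, IsBlackRadius δ G x ρ := by
  obtain ⟨c, ε, hε, hsmall⟩ := h.exists_ballMass_eq_mul x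
  obtain ⟨K, hK⟩ := h.exists_abs_ballMass_sub_le x
  have ha : 0 < min ε ν := lt_min hε hν
  set b := max (K / (1 - 2 * δ)) ν
  have hab : min ε ν ≤ b := (min_le_right _ _).trans (le_max_right _ _)
  obtain ⟨ρ, hρ, hmax⟩ := isCompact_Icc.exists_isMaxOn (nonempty_Icc.2 hab)
    (f := fun ω => ballMass G x ω / ω) <|
    (h.isMassFunction.continuous_ballMass x).continuousOn.div continuousOn_id
      fun ω hω => (ha.trans_le hω.1).ne'
  have hρ0 : 0 < ρ := ha.trans_le hρ.1
  have hρblack : 2 * (1 - δ) ≤ ballMass G x ρ / ρ :=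
    ((le_div_iff₀ hν).2 hblack).trans (hmax ⟨min_le_right _ _, le_max_right _ _⟩)
  refine ⟨ρ, hρ0, (le_div_iff₀ hρ0).1 hρblack, fun ω hω => (div_le_div_iff₀ hω hρ0).1 ?_⟩
  rcases lt_or_ge ω (min ε ν) with hlt | hge
  · have hconst : ballMass G x ω / ω = ballMass G x (min ε ν) / min ε ν := by
      rw [hsmall ω ⟨hω, hlt.le.trans (min_le_left _ _)⟩, hsmall _ ⟨ha, min_le_left _ _⟩,
        mul_div_cancel_right₀ _ hω.ne', mul_div_cancel_right₀ _ ha.ne']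
    exact hconst.trans_le (hmax ⟨le_rfl, hab⟩)
  rcases le_or_gt ω b with hle | hgt
  · exact hmax ⟨hge, hle⟩
  · refine le_trans ?_ hρblack
    have hKω : K < ω * (1 - 2 * δ) :=
      (div_lt_iff₀ (by linarith)).1 ((le_max_left _ _).trans_lt hgt)
    rw [div_le_iff₀ hω]
    linarith [abs_le.1 (hK ω hω)]

theorem exists_isBlackWitness (h : IsProfile n e G) (hδ2 : δ < 1 / 2) (hν : 0 < ν)
    (hblack : 2 * (1 - δ) * ν < ballMass G x ν) :
    ∃ ρ, IsBlackRadius δ G x ρ ∧ IsBlackWitness δ G x ρ := by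
  obtain ⟨ρ, hρ⟩ := h.exists_isBlackRadius hδ2 hν hblack.le
  exact ⟨ρ, hρ, hρ.isBlackWitness hν hblack⟩

theorem exists_isWhiteWitness (h : IsProfile n e G) (hδ2 : δ < 1 / 2) (hν : 0 < ν)
    (hwhite : ballMass G x ν < 2 * δ * ν) :
    ∃ ρ, IsWhiteRadius δ G x ρ ∧ IsWhiteWitness δ G x ρ := by
  obtain ⟨ρ, hρ, hwit⟩ := h.dual.exists_isBlackWitness (x := -x) hδ2 hν
    (by rw [ballMass_dual_neg]; linarith)
  exact ⟨ρ, isBlackRadius_dual_neg.1 hρ, isBlackWitness_dual_neg.1 hwit⟩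

theorem isBlackWitness_or_exists (h : IsProfile n e G) (hδ2 : δ < 1 / 2)
    (hx : IsUnbalanced δ G x) (hρ : IsBlackRadius δ G x ρ) :
    IsBlackWitness δ G x ρ ∨ ∃ σ, IsWhiteRadius δ G x σ ∧ IsWhiteWitness δ G x σ := by
  obtain ⟨ν, hν, hwhite | hblack⟩ := hx
  · exact Or.inr (h.exists_isWhiteWitness hδ2 hν hwhite)
  · exact Or.inl (hρ.isBlackWitness hν hblack)

theorem isWhiteWitness_or_exists (h : IsProfile n e G) (hδ2 : δ < 1 / 2)
    (hx : IsUnbalanced δ G x) (hρ : IsWhiteRadius δ G x ρ) :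
    IsWhiteWitness δ G x ρ ∨ ∃ σ, IsBlackRadius δ G x σ ∧ IsBlackWitness δ G x σ := by
  have := h.dual.isBlackWitness_or_exists hδ2 (isUnbalanced_dual_neg.2 hx)
    (isBlackRadius_dual_neg.2 hρ)
  simpa only [isBlackWitness_dual_neg, isWhiteRadius_dual_neg, isWhiteWitness_dual_neg] using this

/- If no density exceeds `1 - δ`, then `m` itself is an extremal radius, and `x` is unbalanced by a
white radius smaller than `m`. -/
theorem exists_isBlackWitness_of_isGreatest (h : IsProfile n e G) (hδ2 : δ < 1 / 2)
    (hx : IsUnbalanced δ G x) (hm : IsGreatest (extremeRadii δ G x) m)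
    (hblack : 2 * (1 - δ) * m ≤ ballMass G x m) :
    ∃ ρ, IsBlackRadius δ G x ρ ∧ IsBlackWitness δ G x ρ := by
  have hm0 : 0 < m := hm.1.1
  by_cases hstrict : ∃ ν > 0, 2 * (1 - δ) * ν < ballMass G x ν
  · obtain ⟨ν, hν, hνblack⟩ := hstrict
    exact h.exists_isBlackWitness hδ2 hν hνblack
  push Not at hstrict
  obtain ⟨ν, hν, hνwhite | hνblack⟩ := hx
  · have hνm : ν < m := (hm.2 ⟨hν, Or.inl hνwhite.le⟩).lt_of_ne <| by
      rintro rfl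
      nlinarith
    refine ⟨m, ⟨hm0, hblack, fun ω hω => ?_⟩, hm0, Or.inr ⟨hblack, ν, hν, hνm, hνwhite⟩⟩
    calc ballMass G x ω * m ≤ 2 * (1 - δ) * ω * m :=
          mul_le_mul_of_nonneg_right (hstrict ω hω) hm0.le
      _ = 2 * (1 - δ) * m * ω := by ring
      _ ≤ ballMass G x m * ω := mul_le_mul_of_nonneg_right hblack hω.le
  · exact absurd (hstrict ν hν) hνblack.not_ge

theorem exists_isWhiteWitness_of_isGreatest (h : IsProfile n e G) (hδ2 : δ < 1 / 2)
    (hx : IsUnbalanced δ G x) (hm : IsGreatest (extremeRadii δ G x) m)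
    (hwhite : ballMass G x m ≤ 2 * δ * m) :
    ∃ ρ, IsWhiteRadius δ G x ρ ∧ IsWhiteWitness δ G x ρ := by
  rw [← extremeRadii_dual_neg] at hm
  simpa only [isBlackRadius_dual_neg, isBlackWitness_dual_neg] using
    h.dual.exists_isBlackWitness_of_isGreatest hδ2 (isUnbalanced_dual_neg.2 hx) hm
      (by rw [ballMass_dual_neg]; linarith)

theorem ballMass_of_endpoints_mem (h : IsProfile n e G) (hleft : x - ω ≤ e 0)
    (hright : e (2 * n) ≤ x + ω) :
    ballMass G x ω = G (e (2 * n)) - G (e 0) + ω - (x - e 0) := by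
  have := h.left (x - ω) hleft (e 0) self_mem_Iic
  have := h.right (e (2 * n)) self_mem_Ici (x + ω) hright
  rw [ballMass]
  linarith

theorem black_isGreatest_iff (h : IsProfile n e G) (hδ2 : δ < 1 / 2)
    (hm : IsGreatest (extremeRadii δ G x) m) (hx : x < e (2 * n))
    (hmid : x - e 0 ≤ e (2 * n) - x) :
    (2 * (1 - δ) * m ≤ ballMass G x m ∧ e (2 * n) - x ≤ m) ↔
      (x - e 0) + (1 - 2 * δ) * (e (2 * n) - x) ≤ G (e (2 * n)) - G (e 0) := by
  constructor
  · rintro ⟨hblack, hle⟩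
    rw [h.ballMass_of_endpoints_mem (by linarith) (by linarith)] at hblack
    nlinarith
  · intro hmass
    have hle : e (2 * n) - x ≤ m := hm.2 ⟨sub_pos.2 hx, Or.inr <| by
      rw [h.ballMass_of_endpoints_mem (by linarith) (by linarith)]
      linarith⟩
    refine ⟨hm.1.2.resolve_left fun hwhite => ?_, hle⟩
    rw [h.ballMass_of_endpoints_mem (by linarith) (by linarith)] at hwhite
    nlinarith [hm.1.1]

theorem white_isGreatest_iff (h : IsProfile n e G) (hδ2 : δ < 1 / 2)
    (hm : IsGreatest (extremeRadii δ G x) m) (hx : e 0 < x)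
    (hmid : e (2 * n) - x ≤ x - e 0) :
    (ballMass G x m ≤ 2 * δ * m ∧ x - e 0 ≤ m) ↔
      G (e (2 * n)) - G (e 0) ≤ 2 * δ * (x - e 0) := by
  have := h.dual.black_isGreatest_iff hδ2 (x := -x) (extremeRadii_dual_neg δ G x ▸ hm)
    (by simpa only [dualEndpoints, Nat.sub_self] using neg_lt_neg hx)
    (by simp only [dualEndpoints, Nat.sub_self, Nat.sub_zero]; linarith)
  simp only [dualEndpoints, Nat.sub_self, Nat.sub_zero, ballMass_dual_neg, _root_.dual,
    neg_neg] at this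
  constructor
  · rintro ⟨hwhite, hle⟩
    linarith [this.1 ⟨by linarith, by linarith⟩]
  · intro hmass
    obtain ⟨hwhite, hle⟩ := this.2 (by linarith)
    exact ⟨by linarith, by linarith⟩

end IsProfile

end ExtremalRadii

/-! ### Configurations as profiles -/

theorem hasSlopeOn_of_forall_le {G : ℝ → ℝ} {c : ℝ} {I : Set ℝ}
    (h : ∀ x ∈ I, ∀ y ∈ I, x ≤ y → G y - G x = c * (y - x)) : HasSlopeOn G c I := by
  intro x hx y hy
  rcases le_total x y with hxy | hyx
  · exact h x hx y hy hxy
  · linarith [h y hy x hx hyx]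

namespace Config

/-- The endpoints `0, a 0, b 0, a 1, …, b (r - 1)` of `C` in increasing order, continued by the
junk value `0`. -/
noncomputable def endpointSeq (C : Config) : ℕ → ℝ
  | 0 => 0
  | i + 1 =>
    if h : i / 2 < C.r then (if i % 2 = 0 then C.a ⟨i / 2, h⟩ else C.b ⟨i / 2, h⟩) else 0

/-- The signed mass of `C` between `0` and `x`. -/
noncomputable def mass (C : Config) (x : ℝ) : ℝ := ∫ t in (0 : ℝ)..x, C.carrier.indicator 1 t

variable (C : Config) {δ p ω x y : ℝ} {i k : ℕ} {I : Set ℝ}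

theorem endpointSeq_zero : C.endpointSeq 0 = 0 := rfl

theorem endpointSeq_odd (hk : k < C.r) : C.endpointSeq (2 * k + 1) = C.a ⟨k, hk⟩ := by
  simp [endpointSeq, hk]

theorem endpointSeq_even (hk : k < C.r) : C.endpointSeq (2 * k + 2) = C.b ⟨k, hk⟩ := by
  simp [endpointSeq, hk, Nat.add_mod, show (2 * k + 1) / 2 = k by omega]

theorem endpointSeq_lt_succ (hi : i < 2 * C.r) : C.endpointSeq i < C.endpointSeq (i + 1) := by
  obtain ⟨k, rfl | rfl⟩ := i.even_or_odd'
  · rw [endpointSeq_odd C (by omega)]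
    rcases k with _ | k
    · exact C.ha _
    · exact (endpointSeq_even C (k := k) (by omega)).trans_lt
        (C.hba _ _ (Fin.mk_lt_mk.2 k.lt_succ_self))
  · rw [endpointSeq_odd C (by omega), endpointSeq_even C (by omega)]
    exact C.hab _

theorem strictMonoOn_endpointSeq : StrictMonoOn C.endpointSeq (Iic (2 * C.r)) :=
  strictMonoOn_Iic_of_lt_succ fun _ => C.endpointSeq_lt_succ

theorem endpoints_eq_image : C.endpoints = C.endpointSeq '' Iic (2 * C.r) := by
  ext c
  constructor
  · rintro (rfl | ⟨k, rfl⟩ | ⟨k, rfl⟩)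
    · exact ⟨0, Nat.zero_le _, rfl⟩
    · exact ⟨2 * k + 1, mem_Iic.2 (by omega), C.endpointSeq_odd k.2⟩
    · exact ⟨2 * k + 2, mem_Iic.2 (by omega), C.endpointSeq_even k.2⟩
  · rintro ⟨_ | i, hi, rfl⟩
    · exact Or.inl rfl
    · obtain ⟨k, rfl | rfl⟩ := i.even_or_odd' <;> rw [mem_Iic] at hi
      · exact Or.inr (Or.inl ⟨_, (C.endpointSeq_odd (by omega)).symm⟩)
      · exact Or.inr (Or.inr ⟨_, (C.endpointSeq_even (by omega)).symm⟩)

theorem mem_carrier_iff : x ∈ C.carrier ↔ x < C.endpointSeq 0 ∨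
    ∃ k < C.r, x ∈ Ioo (C.endpointSeq (2 * k + 1)) (C.endpointSeq (2 * k + 2)) := by
  simp only [carrier, mem_union, mem_Iio, mem_iUnion, endpointSeq_zero]
  refine or_congr_right ⟨fun ⟨k, hk⟩ => ⟨k, k.2, ?_⟩, fun ⟨k, hk, hx⟩ => ⟨⟨k, hk⟩, ?_⟩⟩
  · rwa [endpointSeq_odd C k.2, endpointSeq_even C k.2]
  · rwa [endpointSeq_odd C hk, endpointSeq_even C hk] at hx

theorem measurableSet_carrier : MeasurableSet C.carrier :=
  measurableSet_Iio.union (MeasurableSet.iUnion fun _ => measurableSet_Ioo)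

theorem mass_sub_mass (hxy : x ≤ y) :
    C.mass y - C.mass x = (volume (C.carrier ∩ Ioo x y)).toReal := by
  have hint : ∀ a b, IntervalIntegrable (C.carrier.indicator (1 : ℝ → ℝ)) volume a b := fun a b =>
    have hon : ∀ s : Set ℝ, volume s ≠ ⊤ → IntegrableOn (C.carrier.indicator (1 : ℝ → ℝ)) s :=
      fun s hs => Integrable.indicator (integrableOn_const hs) C.measurableSet_carrier
    ⟨hon _ measure_Ioc_lt_top.ne, hon _ measure_Ioc_lt_top.ne⟩
  rw [mass, mass, intervalIntegral.integral_interval_sub_left (hint _ _) (hint _ _),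
    intervalIntegral.integral_of_le hxy, integral_Ioc_eq_integral_Ioo,
    integral_indicator_one C.measurableSet_carrier,
    measureReal_restrict_apply C.measurableSet_carrier, measureReal_def]

theorem hasSlopeOn_mass_one (hI : I.OrdConnected) (h : interior I ⊆ C.carrier) :
    HasSlopeOn C.mass 1 I := by
  refine hasSlopeOn_of_forall_le fun x hx y hy hxy => ?_
  have hsub : Ioo x y ⊆ C.carrier :=
    (interior_maximal (Ioo_subset_Icc_self.trans (hI.out hx hy)) isOpen_Ioo).trans h
  rw [C.mass_sub_mass hxy, inter_eq_self_of_subset_right hsub, Real.volume_Ioo,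
    ENNReal.toReal_ofReal (sub_nonneg.2 hxy), one_mul]

theorem hasSlopeOn_mass_zero (hI : I.OrdConnected) (h : Disjoint C.carrier (interior I)) :
    HasSlopeOn C.mass 0 I := by
  refine hasSlopeOn_of_forall_le fun x hx y hy hxy => ?_
  have hdisj : Disjoint C.carrier (Ioo x y) :=
    h.mono_right (interior_maximal (Ioo_subset_Icc_self.trans (hI.out hx hy)) isOpen_Ioo)
  rw [C.mass_sub_mass hxy, hdisj.inter_eq, measure_empty, ENNReal.toReal_zero, zero_mul]

theorem disjoint_carrier_Ioo (hk : k < C.r) :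
    Disjoint C.carrier (Ioo (C.endpointSeq (2 * k)) (C.endpointSeq (2 * k + 1))) := by
  rw [disjoint_left]
  intro x hx hxk
  have hmono := C.strictMonoOn_endpointSeq.monotoneOn
  rcases C.mem_carrier_iff.1 hx with h0 | ⟨l, hl, hxl⟩
  · exact (h0.trans_le (hmono (mem_Iic.2 (by omega)) (mem_Iic.2 (by omega))
      (by omega))).not_gt hxk.1
  rcases Nat.lt_or_ge l k with hlk | hkl
  · exact (hxl.2.trans_le (hmono (mem_Iic.2 (by omega)) (mem_Iic.2 (by omega))
      (by omega : 2 * l + 2 ≤ 2 * k))).not_gt hxk.1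
  · exact (hxk.2.trans_le (hmono (mem_Iic.2 (by omega)) (mem_Iic.2 (by omega))
      (by omega : 2 * k + 1 ≤ 2 * l + 1))).not_gt hxl.1

theorem disjoint_carrier_Ioi : Disjoint C.carrier (Ioi (C.endpointSeq (2 * C.r))) := by
  rw [disjoint_left]
  intro x hx hxr
  have hmono := C.strictMonoOn_endpointSeq.monotoneOn
  rcases C.mem_carrier_iff.1 hx with h0 | ⟨l, hl, hxl⟩
  · exact (h0.trans_le (hmono (mem_Iic.2 (by omega)) self_mem_Iic (by omega))).not_gt hxr
  · exact (hxl.2.trans_le (hmono (mem_Iic.2 (by omega)) self_mem_Iic (by omega))).not_gt hxr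

theorem isProfile : IsProfile C.r C.endpointSeq C.mass where
  lt_succ _ := C.endpointSeq_lt_succ
  left := C.hasSlopeOn_mass_one ordConnected_Iic fun x hx =>
    C.mem_carrier_iff.2 (Or.inl (by simpa using hx))
  right := C.hasSlopeOn_mass_zero ordConnected_Ici (by simpa using C.disjoint_carrier_Ioi)
  cell i hi := by
    obtain ⟨k, rfl | rfl⟩ := i.even_or_odd'
    · simpa using C.hasSlopeOn_mass_zero ordConnected_Icc
        (by simpa using C.disjoint_carrier_Ioo (k := k) (by omega))
    · simpa [Nat.add_mod] using C.hasSlopeOn_mass_one ordConnected_Icc fun x hx =>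
        C.mem_carrier_iff.2 (Or.inr ⟨k, by omega, interior_Icc.subset hx⟩)

theorem relMeasure_eq (p : ℝ) (hω : 0 ≤ ω) :
    relMeasure C.carrier p ω = ballMass C.mass p ω / (2 * ω) := by
  rw [relMeasure, ballMass, C.mass_sub_mass (by linarith)]

variable {C}

theorem relMeasure_le_iff (hω : 0 < ω) :
    relMeasure C.carrier p ω ≤ δ ↔ ballMass C.mass p ω ≤ 2 * δ * ω := by
  rw [relMeasure_eq C p hω.le, div_le_iff₀ (by linarith), show δ * (2 * ω) = 2 * δ * ω by ring]

theorem le_relMeasure_iff (hω : 0 < ω) :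
    δ ≤ relMeasure C.carrier p ω ↔ 2 * δ * ω ≤ ballMass C.mass p ω := by
  rw [relMeasure_eq C p hω.le, le_div_iff₀ (by linarith), show δ * (2 * ω) = 2 * δ * ω by ring]

theorem isCounterexample_iff :
    IsCounterexample δ C ↔ ∀ p ∈ C.endpoints, IsUnbalanced δ C.mass p := by
  refine forall₂_congr fun p _ => exists_congr fun ω => and_congr_right fun hω => ?_
  rw [mem_Icc, not_and_or, le_relMeasure_iff hω, relMeasure_le_iff hω, not_le, not_le]

end Config

section Minimality

variable {δ : ℝ} {n r : ℕ} {e : ℕ → ℝ} {G : ℝ → ℝ}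

/-- The configuration whose endpoints are those of a profile, translated so that the first one
is `0`. -/
noncomputable def IsProfile.toConfig (h : IsProfile n e G) (hn : 0 < n) : Config where
  r := n
  hr := hn
  a k := e (2 * k + 1) - e 0
  b k := e (2 * k + 2) - e 0
  ha k := sub_pos.2 (h.lt (by omega) (by omega))
  hab k := sub_lt_sub_right (h.lt (by omega) (by omega)) _
  hba k l hkl := sub_lt_sub_right (h.lt (by have : (k : ℕ) < l := hkl; omega) (by omega)) _

theorem IsProfile.endpointSeq_toConfig (h : IsProfile n e G) (hn : 0 < n) {i : ℕ}
    (hi : i ≤ 2 * n) : (h.toConfig hn).endpointSeq i = e i - e 0 := by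
  rcases i with _ | i
  · exact (sub_self _).symm
  · obtain ⟨k, rfl | rfl⟩ := i.even_or_odd'
    · exact (h.toConfig hn).endpointSeq_odd (k := k) (show k < n by omega)
    · exact (h.toConfig hn).endpointSeq_even (k := k) (show k < n by omega)

theorem HasSlopeOn.comp_add_right {c d : ℝ} {I J : Set ℝ} (h : HasSlopeOn G c I)
    (hJ : ∀ x ∈ J, x + d ∈ I) : HasSlopeOn (fun x => G (x + d)) c J := by
  intro x hx y hy
  rw [h _ (hJ x hx) _ (hJ y hy)]
  ring

theorem IsProfile.isProfile_toConfig (h : IsProfile n e G) (hn : 0 < n) :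
    IsProfile n (h.toConfig hn).endpointSeq (fun x => G (x + e 0)) where
  lt_succ := (h.toConfig hn).isProfile.lt_succ
  left := h.left.comp_add_right fun x hx => by
    rw [h.endpointSeq_toConfig hn (Nat.zero_le _)] at hx
    exact le_sub_iff_add_le.1 (mem_Iic.1 hx)
  right := h.right.comp_add_right fun x hx => by
    rw [h.endpointSeq_toConfig hn le_rfl] at hx
    exact sub_le_iff_le_add.1 (mem_Ici.1 hx)
  cell i hi := (h.cell i hi).comp_add_right fun x hx => by
    rw [h.endpointSeq_toConfig hn hi.le, h.endpointSeq_toConfig hn hi] at hx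
    exact ⟨sub_le_iff_le_add.1 hx.1, le_sub_iff_add_le.1 hx.2⟩

theorem IsProfile.isUnbalanced_toConfig (h : IsProfile n e G) (hn : 0 < n) {x : ℝ}
    (hx : IsUnbalanced δ G (x + e 0)) : IsUnbalanced δ (h.toConfig hn).mass x := by
  obtain ⟨ω, hω, hmass⟩ := hx
  refine ⟨ω, hω, ?_⟩
  have hsub := (h.toConfig hn).isProfile.sub_eq_sub (h.isProfile_toConfig hn)
    (show x - ω ≤ x + ω by linarith)
  rwa [ballMass, hsub, show x + ω + e 0 = x + e 0 + ω by ring,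
    show x - ω + e 0 = x + e 0 - ω by ring]

theorem IsProfile.exists_not_isUnbalanced (h : IsProfile n e G) (hδ2 : δ < 1 / 2) (hn : n < r)
    (hmin : ∀ C : Config, C.r < r → ¬IsCounterexample δ C) :
    ∃ i ≤ 2 * n, ¬IsUnbalanced δ G (e i) := by
  rcases n.eq_zero_or_pos with rfl | hpos
  · exact ⟨0, le_rfl, h.not_isUnbalanced_of_zero hδ2⟩
  by_contra! hcon
  refine hmin (h.toConfig hpos) hn (Config.isCounterexample_iff.2 fun p hp => ?_)
  rw [Config.endpoints_eq_image] at hp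
  obtain ⟨i, hi, rfl⟩ := hp
  refine h.isUnbalanced_toConfig hpos ?_
  rw [h.endpointSeq_toConfig hpos hi, sub_add_cancel]
  exact hcon i hi

end Minimality

/-! ### Nestedness without the first white cell -/

/-- The set `F_W` of the paper, for the family `Q` of white intervals: only the bounded gaps between
two bounded black intervals are absorbed. -/
def innerWhiteUnion (r : ℕ) (e : ℕ → ℝ) (Q : Set (ℝ × ℝ)) : Set ℝ :=
  absorb (balls Q) fun k : {k : Fin r // (k : ℕ) ≠ 0} => whiteCell r e k

section InnerWhite

variable {δ vB vW s t u v x : ℝ} {r : ℕ} {e E : ℕ → ℝ} {G : ℝ → ℝ} {P Q : Set (ℝ × ℝ)}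

theorem innerWhiteUnion_subset_whiteUnion : innerWhiteUnion r e Q ⊆ whiteUnion r e Q := by
  intro x hx
  rcases mem_absorb.1 hx with hQ | ⟨k, hk⟩
  · exact subset_absorb hQ
  · exact mem_absorb.2 (Or.inr ⟨k, hk⟩)

theorem mem_innerWhiteUnion_of_notMem_Ioo (hx : x ∈ whiteUnion r e Q) (hx0 : x ∉ Ioo (e 0) (e 1)) :
    x ∈ innerWhiteUnion r e Q := by
  rcases mem_absorb.1 hx with hQ | ⟨k, hk, hxk⟩
  · exact subset_absorb hQ
  · have hk0 : (k : ℕ) ≠ 0 := fun h0 => hx0 (by simpa only [whiteCell, h0] using hxk)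
    exact mem_absorb.2 (Or.inr ⟨⟨k, hk0⟩, hk, hxk⟩)

namespace IsFrame

theorem Icc_subset_innerWhiteUnion (S : IsFrame δ r E G vB vW)
    (hQ : Q ⊆ whiteRadii δ r E G vB vW) (hx : x ∈ innerWhiteUnion r E Q) :
    Icc x (E 1) ⊆ innerWhiteUnion r E Q := by
  intro y hy
  rcases mem_absorb.1 hx with hxQ | ⟨⟨k, hk0⟩, -, hxk⟩
  · obtain ⟨q, hq, hxq⟩ := mem_balls.1 hxQ
    obtain ⟨⟨⟨i, hi, hiq⟩, hBq, -⟩, hradius⟩ := hQ hq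
    have hi0 : i ≠ 0 := by
      rintro rfl
      linarith [S.first_le_black]
    have hq1 : E 1 ≤ q.1 := hiq ▸ S.isProfile.le (Nat.one_le_iff_ne_zero.2 hi0) hi
    exact subset_absorb (Ioo_subset_balls hq
      ⟨hxq.1.trans_le hy.1, by linarith [hy.2, hradius.pos]⟩)
  · have := S.isProfile.le (i := 1) (j := 2 * k) (by omega) (by omega)
    linarith [hxk.1, hy.1, hy.2]

theorem exists_innerWhite_component (S : IsFrame δ r E G vB vW)
    (hQ : Q ⊆ whiteRadii δ r E G vB vW) (hx : x ∈ innerWhiteUnion r E Q) :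
    ∃ u v, IsComponentIoo (innerWhiteUnion r E Q) u v ∧ x ∈ Ioo u v := by
  obtain ⟨u, v, hc, hux, hxv⟩ :=
    S.exists_white_component hQ (innerWhiteUnion_subset_whiteUnion hx)
  exact exists_isComponentIoo (isOpen_absorb isOpen_balls fun _ => isOpen_Ioo) hx
    hux.le (mt (@innerWhiteUnion_subset_whiteUnion _ _ _ _) hc.left_notMem)
    hxv.le (mt (@innerWhiteUnion_subset_whiteUnion _ _ _ _) hc.right_notMem)

/- The two components can only differ by a part of the first white cell. -/
theorem exists_white_component_of_innerWhite (S : IsFrame δ r E G vB vW)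
    (hQ : Q ⊆ whiteRadii δ r E G vB vW) (hc : IsComponentIoo (innerWhiteUnion r E Q) u v) :
    ∃ u' ≤ u, IsComponentIoo (whiteUnion r E Q) u' v ∧ u ≤ max u' (E 1) := by
  obtain ⟨x, hx⟩ := nonempty_Ioo.2 hc.lt
  obtain ⟨u', v', hc', hx'⟩ :=
    S.exists_white_component hQ (innerWhiteUnion_subset_whiteUnion (hc.subset hx))
  obtain ⟨hu, hv⟩ := hc'.le_and_le_of_Ioo_subset
    (hc.subset.trans innerWhiteUnion_subset_whiteUnion) hx hx'
  have first_cell : ∀ y ∈ Ioo u' v', y ∉ innerWhiteUnion r E Q → y < E 1 := fun y hy hyQ =>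
    (not_imp_comm.1 (mem_innerWhiteUnion_of_notMem_Ioo (hc'.subset hy)) hyQ).2
  have hvv : v = v' := hv.eq_of_not_lt fun hlt => hc.right_notMem <|
    S.Icc_subset_innerWhiteUnion hQ (hc.subset hx)
      ⟨hx.2.le, (first_cell v ⟨hu.trans_lt hc.lt, hlt⟩ hc.right_notMem).le⟩
  refine ⟨u', hu, hvv ▸ hc', ?_⟩
  by_contra! hlt
  obtain ⟨hu'u, h1u⟩ := max_lt_iff.1 hlt
  exact (first_cell u ⟨hu'u, hc.lt.trans_le hv⟩ hc.left_notMem).not_gt h1u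

theorem subset_or_subset_innerWhite (S : IsFrame δ r E G vB vW)
    (hP : IsCover δ r E G vB vW P (whiteRadii δ r E G vB vW))
    (hQ : IsCover δ r E G vB vW (blackRadii δ r E G vB vW) Q)
    (hB : IsComponentIoo (blackUnion r E P) s t) (hW : IsComponentIoo (innerWhiteUnion r E Q) u v)
    (hne : (Ioo s t ∩ Ioo u v).Nonempty) : Ioo s t ⊆ Ioo u v ∨ Ioo u v ⊆ Ioo s t := by
  obtain ⟨x, hxB, hxW⟩ := hne
  obtain ⟨u', hu, hW', hu1⟩ := S.exists_white_component_of_innerWhite hQ.white hW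
  rcases S.subset_or_subset hP hQ hB hW' (hxB.1.trans hxW.2) (hu.trans_lt (hxW.1.trans hxB.2)) with
    ⟨hsu, hvt⟩ | ⟨hus, htv⟩
  · exact Or.inr (Ioo_subset_Ioo (hsu.trans hu) hvt)
  refine Or.inl (Ioo_subset_Ioo (not_lt.1 fun hsu => ?_) htv)
  have hs1 : s < E 1 := by
    rcases le_max_iff.1 hu1 with h | h <;> linarith
  obtain ⟨k, hk, rfl⟩ := S.left_eq_of_white_component hQ.white hW'
  have h0 := S.isProfile.le (i := 0) (j := 2 * k) (by omega) (by omega)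
  rcases S.left_eq_of_component hP.black hB with hs0 | ⟨l, hl, rfl⟩
  · linarith
  · exact hs1.not_ge (S.isProfile.le (by omega) (by omega))

theorem Ioo_ne_Ioo (S : IsFrame δ r E G vB vW)
    (hP : P ⊆ blackRadii δ r E G vB vW) (hQ : Q ⊆ whiteRadii δ r E G vB vW)
    (hB : IsComponentIoo (blackUnion r E P) s t)
    (hW : IsComponentIoo (innerWhiteUnion r E Q) u v) : Ioo s t ≠ Ioo u v := by
  intro heq
  have htv : t = v := by rw [← csSup_Ioo hB.lt, heq, csSup_Ioo hW.lt]
  obtain ⟨u', -, hW', -⟩ := S.exists_white_component_of_innerWhite hQ hW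
  obtain ⟨k, hk, rfl⟩ := S.right_eq_of_component hP hB
  rcases S.right_eq_of_white_component hQ hW' with hv | ⟨l, hl, rfl⟩
  · exact ((S.isProfile.le (by omega) le_rfl).trans_lt hv).ne htv
  · rw [S.isProfile.eq_iff_eq (by omega) (by omega)] at htv
    omega

end IsFrame

end InnerWhite

/-! ### The frame of a minimal counterexample -/

namespace Config

variable {C : Config} {δ vB vW : ℝ} {μ : ℝ → ℝ}

theorem endpointSeq_last (hlast : IsGreatest (range C.b) 1) : C.endpointSeq (2 * C.r) = 1 := by
  have hr := C.hr
  apply le_antisymm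
  · rw [show 2 * C.r = 2 * (C.r - 1) + 2 by omega, C.endpointSeq_even (by omega)]
    exact hlast.2 ⟨_, rfl⟩
  · obtain ⟨k, hk⟩ := hlast.1
    rw [← hk, ← C.endpointSeq_even k.2]
    exact C.isProfile.le (by omega) le_rfl

theorem Fpts_eq : Fpts C vB vW = innerEndpoints C.r C.endpointSeq vB vW := by
  rw [innerEndpoints, ← endpoints_eq_image]
  rfl

/-- The pairs `(p, μ p)` for the endpoints `p ∈ F` of a given colour. -/
def chosenRadii (C : Config) (μ : ℝ → ℝ) (vB vW : ℝ) (color : ℝ → Prop) : Set (ℝ × ℝ) :=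
  (fun p => (p, μ p)) '' {p | p ∈ Fpts C vB vW ∧ color p}

theorem FB1_eq_balls : FB1 C δ μ vB vW = balls (C.chosenRadii μ vB vW (IsBlack C δ)) := by
  rw [FB1, balls, chosenRadii, biUnion_image]

theorem FW1_eq_balls : FW1 C δ μ vB vW = balls (C.chosenRadii μ vB vW (IsWhite C δ)) := by
  rw [FW1, balls, chosenRadii, biUnion_image]

theorem blackCell_endpointSeq (k : Fin C.r) :
    blackCell C.r C.endpointSeq k = Ioo (C.a k) (C.b k) := by
  rw [blackCell, C.endpointSeq_odd k.2, C.endpointSeq_even k.2]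

theorem whiteCell_endpointSeq {k : ℕ} (hk : k + 1 < C.r) :
    whiteCell C.r C.endpointSeq ⟨k + 1, hk⟩ =
      Ioo (C.b ⟨k, Nat.lt_of_succ_lt hk⟩) (C.a ⟨k + 1, hk⟩) := by
  rw [whiteCell, C.endpointSeq_odd hk]
  exact congrArg (Ioo · _) (C.endpointSeq_even (Nat.lt_of_succ_lt hk))

theorem FB_eq_blackUnion :
    FB C δ μ vB vW =
      blackUnion C.r C.endpointSeq (C.chosenRadii μ vB vW (IsBlack C δ)) := by
  ext x
  simp only [FB, FB2, FB1_eq_balls, blackUnion, mem_absorb, blackCell_endpointSeq, mem_union,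
    mem_iUnion, mem_ofPred_eq, exists_prop]

theorem FW_eq_innerWhiteUnion :
    FW C δ μ vB vW =
      innerWhiteUnion C.r C.endpointSeq (C.chosenRadii μ vB vW (IsWhite C δ)) := by
  ext x
  simp only [FW, FW2, FW1_eq_balls, innerWhiteUnion, mem_absorb, mem_union, mem_iUnion, exists_prop]
  refine or_congr_right ⟨?_, ?_⟩
  · rintro ⟨k, hk, hx⟩
    exact ⟨⟨⟨k + 1, hk⟩, k.succ_ne_zero⟩, by rwa [whiteCell_endpointSeq hk]⟩
  · rintro ⟨⟨⟨_ | k, hk⟩, hk0⟩, hx⟩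
    · exact absurd rfl hk0
    · exact ⟨k, hk, by rwa [whiteCell_endpointSeq hk] at hx⟩

end Config

namespace IsCounterexample

variable {C : Config} {δ vB vW p : ℝ} {μ : ℝ → ℝ}

theorem isUnbalanced (h : IsCounterexample δ C) (hp : p ∈ C.endpoints) :
    IsUnbalanced δ C.mass p :=
  Config.isCounterexample_iff.1 h p hp

theorem pos_delta (h : IsCounterexample δ C) : 0 < δ :=
  (h.isUnbalanced (mem_insert 0 _)).pos_delta C.isProfile.isMassFunction

theorem isGreatest_omegaMax (h : IsCounterexample δ C) (hδ2 : δ < 1 / 2) (hp : p ∈ C.endpoints) :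
    IsGreatest (extremeRadii δ C.mass p) (omegaMax C δ p) := by
  obtain ⟨m, hm⟩ := C.isProfile.exists_isGreatest_extremeRadii hδ2 (h.isUnbalanced hp)
  have mem_iff : ∀ ω > 0, relMeasure C.carrier p ω ∉ Ioo δ (1 - δ) ↔
      ω ∈ extremeRadii δ C.mass p := fun ω hω => by
    rw [mem_Ioo, not_and_or, not_lt, not_lt, Config.relMeasure_le_iff hω,
      Config.le_relMeasure_iff hω]
    exact (and_iff_right hω).symm
  have hgreatest : IsGreatest {ω : ℝ | 0 ≤ ω ∧ relMeasure C.carrier p ω ∉ Ioo δ (1 - δ)} m := by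
    refine ⟨⟨hm.1.1.le, (mem_iff m hm.1.1).2 hm.1⟩, fun ω ⟨hω, hωp⟩ => ?_⟩
    rcases hω.eq_or_lt with rfl | hω
    · exact hm.1.1.le
    · exact hm.2 ((mem_iff ω hω).1 hωp)
  rwa [omegaMax, hgreatest.csSup_eq]

theorem isBlack_iff (h : IsCounterexample δ C) (hδ2 : δ < 1 / 2) (hp : p ∈ C.endpoints) :
    IsBlack C δ p ↔ 2 * (1 - δ) * omegaMax C δ p ≤ ballMass C.mass p (omegaMax C δ p) := by
  rw [IsBlack, Config.le_relMeasure_iff (h.isGreatest_omegaMax hδ2 hp).1.1, and_iff_right hp]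

theorem isWhite_iff (h : IsCounterexample δ C) (hδ2 : δ < 1 / 2) (hp : p ∈ C.endpoints) :
    IsWhite C δ p ↔ ballMass C.mass p (omegaMax C δ p) ≤ 2 * δ * omegaMax C δ p := by
  rw [IsWhite, Config.relMeasure_le_iff (h.isGreatest_omegaMax hδ2 hp).1.1, and_iff_right hp]

theorem isBlack_or_isWhite (h : IsCounterexample δ C) (hδ2 : δ < 1 / 2) (hp : p ∈ C.endpoints) :
    IsBlack C δ p ∨ IsWhite C δ p := by
  rw [h.isBlack_iff hδ2 hp, h.isWhite_iff hδ2 hp]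
  exact (h.isGreatest_omegaMax hδ2 hp).1.2.symm

theorem isBlackRadius {ρ : ℝ} (h : IsCounterexample δ C) (hδ2 : δ < 1 / 2) (hp : IsBlack C δ p)
    (hρ : 0 < ρ) (hmax : ∀ ω > 0, relMeasure C.carrier p ω ≤ relMeasure C.carrier p ρ) :
    IsBlackRadius δ C.mass p ρ where
  pos := hρ
  le_ballMass := (Config.le_relMeasure_iff hρ).1
    (hp.2.trans (hmax _ (h.isGreatest_omegaMax hδ2 hp.1).1.1))
  extremal ω hω := by
    have := hmax ω hω
    rw [C.relMeasure_eq p hω.le, C.relMeasure_eq p hρ.le,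
      div_le_div_iff₀ (by linarith) (by linarith)] at this
    linarith

theorem isWhiteRadius {ρ : ℝ} (h : IsCounterexample δ C) (hδ2 : δ < 1 / 2) (hp : IsWhite C δ p)
    (hρ : 0 < ρ) (hmin : ∀ ω > 0, relMeasure C.carrier p ρ ≤ relMeasure C.carrier p ω) :
    IsWhiteRadius δ C.mass p ρ where
  pos := hρ
  ballMass_le := (Config.relMeasure_le_iff hρ).1
    ((hmin _ (h.isGreatest_omegaMax hδ2 hp.1).1.1).trans hp.2)
  extremal ω hω := by
    have := hmin ω hω
    rw [C.relMeasure_eq p hω.le, C.relMeasure_eq p hρ.le,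
      div_le_div_iff₀ (by linarith) (by linarith)] at this
    linarith

theorem isBlack_and_le_omegaMax_iff (h : IsCounterexample δ C) (hδ2 : δ < 1 / 2)
    (hlast : IsGreatest (range C.b) 1) (hp : p ∈ C.endpoints) (hmid : p ≤ 1 / 2) :
    IsBlack C δ p ∧ 1 - p ≤ omegaMax C δ p ↔
      p + (1 - 2 * δ) * (1 - p) ≤ C.mass 1 - C.mass 0 := by
  have := C.isProfile.black_isGreatest_iff hδ2 (h.isGreatest_omegaMax hδ2 hp)
  rw [Config.endpointSeq_last hlast, Config.endpointSeq_zero, sub_zero] at this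
  rw [h.isBlack_iff hδ2 hp, this (by linarith) (by linarith)]

theorem isWhite_and_le_omegaMax_iff (h : IsCounterexample δ C) (hδ2 : δ < 1 / 2)
    (hlast : IsGreatest (range C.b) 1) (hp : p ∈ C.endpoints) (hmid : 1 / 2 ≤ p) :
    IsWhite C δ p ∧ p ≤ omegaMax C δ p ↔ C.mass 1 - C.mass 0 ≤ 2 * δ * p := by
  have := C.isProfile.white_isGreatest_iff hδ2 (h.isGreatest_omegaMax hδ2 hp)
  rw [Config.endpointSeq_last hlast, Config.endpointSeq_zero, sub_zero] at this
  rw [h.isWhite_iff hδ2 hp, this (by linarith) (by linarith)]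

theorem isFrame (h : IsCounterexample δ C) (hδ2 : δ < 1 / 2) (hlast : IsGreatest (range C.b) 1)
    (hmin : ∀ C' : Config, C'.r < C.r → ¬IsCounterexample δ C')
    (hvB : IsGreatest {v | IsBlack C δ v ∧ v ≤ 1 / 2 ∧ 1 - v ≤ omegaMax C δ v} vB)
    (hvW : IsLeast {v | IsWhite C δ v ∧ 1 / 2 ≤ v ∧ v ≤ omegaMax C δ v} vW) :
    IsFrame δ C.r C.endpointSeq C.mass vB vW := by
  have h0 := C.endpointSeq_zero
  have h1 := Config.endpointSeq_last hlast
  obtain ⟨⟨hBblack, hBmid, hBω⟩, hBmax⟩ := hvB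
  obtain ⟨⟨hWwhite, hWmid, hWω⟩, hWmin⟩ := hvW
  have hBmass := (h.isBlack_and_le_omegaMax_iff hδ2 hlast hBblack.1 hBmid).1 ⟨hBblack, hBω⟩
  have hWmass := (h.isWhite_and_le_omegaMax_iff hδ2 hlast hWwhite.1 hWmid).1 ⟨hWwhite, hWω⟩
  have mem_endpoints : ∀ i ≤ 2 * C.r, C.endpointSeq i ∈ C.endpoints := fun i hi =>
    C.endpoints_eq_image ▸ mem_image_of_mem _ hi
  have mem_Icc : ∀ p ∈ C.endpoints, p ∈ Icc 0 1 := fun p hp => by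
    obtain ⟨i, hi, rfl⟩ := C.endpoints_eq_image ▸ hp
    exact ⟨h0 ▸ C.isProfile.le i.zero_le hi, h1 ▸ C.isProfile.le hi le_rfl⟩
  refine ⟨h.pos_delta, hδ2, C.hr, C.isProfile,
    fun n hn e G he => he.exists_not_isUnbalanced hδ2 hn hmin, ?_, ?_, ?_, ?_, ?_, ?_, ?_, ?_⟩ <;>
    simp only [h0, h1, sub_zero, zero_add]
  · exact hBmass
  · exact hWmass
  · intro i hi hmid hmass
    obtain ⟨hblack, hω⟩ := (h.isBlack_and_le_omegaMax_iff hδ2 hlast (mem_endpoints i hi)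
      (by linarith)).2 hmass
    exact hBmax ⟨hblack, by linarith, hω⟩
  · intro i hi hmid hmass
    obtain ⟨hwhite, hω⟩ := (h.isWhite_and_le_omegaMax_iff hδ2 hlast (mem_endpoints i hi)
      (by linarith)).2 hmass
    exact hWmin ⟨hwhite, by linarith, hω⟩
  · linarith
  · linarith
  · exact (mem_Icc vB hBblack.1).1
  · exact (mem_Icc vW hWwhite.1).2

theorem isCover_black (h : IsCounterexample δ C) (hδ2 : δ < 1 / 2)
    (hμ : ∀ v, IsBlack C δ v → 0 < μ v ∧
      ∀ ω > 0, relMeasure C.carrier v ω ≤ relMeasure C.carrier v (μ v)) :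
    IsCover δ C.r C.endpointSeq C.mass vB vW (C.chosenRadii μ vB vW (IsBlack C δ))
      (whiteRadii δ C.r C.endpointSeq C.mass vB vW) := by
  have hradius : ∀ p, IsBlack C δ p → IsBlackRadius δ C.mass p (μ p) := fun p hp =>
    h.isBlackRadius hδ2 hp (hμ p hp).1 (hμ p hp).2
  refine ⟨?_, subset_rfl, fun x hx => ?_⟩
  · rintro _ ⟨p, ⟨hpF, hp⟩, rfl⟩
    exact ⟨Config.Fpts_eq ▸ hpF, hradius p hp⟩
  have hxF : x ∈ Fpts C vB vW := Config.Fpts_eq ▸ hx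
  rcases h.isBlack_or_isWhite hδ2 hxF.1 with hblack | hwhite
  · exact (C.isProfile.isBlackWitness_or_exists hδ2 (h.isUnbalanced hxF.1) (hradius x hblack)).imp
      (fun hwit => ⟨μ x, mem_image_of_mem _ ⟨hxF, hblack⟩, hwit⟩)
      fun ⟨σ, hσ, hwit⟩ => ⟨σ, ⟨hx, hσ⟩, hwit⟩
  · obtain ⟨σ, hσ, hwit⟩ := C.isProfile.exists_isWhiteWitness_of_isGreatest hδ2
      (h.isUnbalanced hxF.1) (h.isGreatest_omegaMax hδ2 hxF.1) ((h.isWhite_iff hδ2 hxF.1).1 hwhite)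
    exact Or.inr ⟨σ, ⟨hx, hσ⟩, hwit⟩

theorem isCover_white (h : IsCounterexample δ C) (hδ2 : δ < 1 / 2)
    (hμ : ∀ v, IsWhite C δ v → 0 < μ v ∧
      ∀ ω > 0, relMeasure C.carrier v (μ v) ≤ relMeasure C.carrier v ω) :
    IsCover δ C.r C.endpointSeq C.mass vB vW (blackRadii δ C.r C.endpointSeq C.mass vB vW)
      (C.chosenRadii μ vB vW (IsWhite C δ)) := by
  have hradius : ∀ p, IsWhite C δ p → IsWhiteRadius δ C.mass p (μ p) := fun p hp =>
    h.isWhiteRadius hδ2 hp (hμ p hp).1 (hμ p hp).2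
  refine ⟨subset_rfl, ?_, fun x hx => ?_⟩
  · rintro _ ⟨p, ⟨hpF, hp⟩, rfl⟩
    exact ⟨Config.Fpts_eq ▸ hpF, hradius p hp⟩
  have hxF : x ∈ Fpts C vB vW := Config.Fpts_eq ▸ hx
  rcases h.isBlack_or_isWhite hδ2 hxF.1 with hblack | hwhite
  · obtain ⟨σ, hσ, hwit⟩ := C.isProfile.exists_isBlackWitness_of_isGreatest hδ2
      (h.isUnbalanced hxF.1) (h.isGreatest_omegaMax hδ2 hxF.1) ((h.isBlack_iff hδ2 hxF.1).1 hblack)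
    exact Or.inl ⟨σ, ⟨hx, hσ⟩, hwit⟩
  · exact (C.isProfile.isWhiteWitness_or_exists hδ2 (h.isUnbalanced hxF.1)
      (hradius x hwhite)).symm.imp (fun ⟨σ, hσ, hwit⟩ => ⟨σ, ⟨hx, hσ⟩, hwit⟩)
      fun hwit => ⟨μ x, mem_image_of_mem _ ⟨hxF, hwhite⟩, hwit⟩

end IsCounterexample

theorem trichotomy_of_subset_or_subset {α : Type*} {A B : Set α} (hA : A.Nonempty)
    (hB : B.Nonempty) (hAB : A ≠ B) (h : (A ∩ B).Nonempty → A ⊆ B ∨ B ⊆ A) :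
    (A ∩ B = ∅ ∧ ¬A ⊆ B ∧ ¬B ⊆ A) ∨ (A ∩ B ≠ ∅ ∧ A ⊆ B ∧ ¬B ⊆ A) ∨
      (A ∩ B ≠ ∅ ∧ ¬A ⊆ B ∧ B ⊆ A) := by
  rcases (A ∩ B).eq_empty_or_nonempty with hempty | hne
  · exact Or.inl ⟨hempty, fun hsub => hA.ne_empty (inter_eq_left.2 hsub ▸ hempty),
      fun hsub => hB.ne_empty (inter_eq_right.2 hsub ▸ hempty)⟩
  · exact Or.inr ((h hne).imp
      (fun hsub => ⟨hne.ne_empty, hsub, fun hsub' => hAB (hsub.antisymm hsub')⟩)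
      fun hsub => ⟨hne.ne_empty, fun hsub' => hAB (hsub'.antisymm hsub), hsub⟩)

theorem component_trichotomy_general
    (δ : ℝ) (hδ2 : δ < 1 / 2)
    (C : Config) (hlast : IsGreatest (range C.b) 1)
    (hctr : IsCounterexample δ C)
    (hmin : ∀ C' : Config, C'.r < C.r → ¬ IsCounterexample δ C')
    (vB vW : ℝ)
    (hvB : IsGreatest {v : ℝ | IsBlack C δ v ∧ v ≤ 1 / 2 ∧ 1 - v ≤ omegaMax C δ v} vB)
    (hvW : IsLeast {v : ℝ | IsWhite C δ v ∧ 1 / 2 ≤ v ∧ v ≤ omegaMax C δ v} vW)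
    (μ : ℝ → ℝ)
    (hμB : ∀ v : ℝ, IsBlack C δ v → 0 < μ v ∧
      ∀ ω > 0, relMeasure C.carrier v ω ≤ relMeasure C.carrier v (μ v))
    (hμW : ∀ v : ℝ, IsWhite C δ v → 0 < μ v ∧
      ∀ ω > 0, relMeasure C.carrier v (μ v) ≤ relMeasure C.carrier v ω)
    (JB JW : Set ℝ)
    (hJB : ∃ x ∈ FB C δ μ vB vW, JB = connectedComponentIn (FB C δ μ vB vW) x)
    (hJW : ∃ x ∈ FW C δ μ vB vW, JW = connectedComponentIn (FW C δ μ vB vW) x) :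
    (JB ∩ JW = ∅ ∧ ¬ JB ⊆ JW ∧ ¬ JW ⊆ JB) ∨
    (JB ∩ JW ≠ ∅ ∧ JB ⊆ JW ∧ ¬ JW ⊆ JB) ∨
    (JB ∩ JW ≠ ∅ ∧ ¬ JB ⊆ JW ∧ JW ⊆ JB) := by
  have S := hctr.isFrame hδ2 hlast hmin hvB hvW
  have hP := hctr.isCover_black (vB := vB) (vW := vW) hδ2 hμB
  have hQ := hctr.isCover_white (vB := vB) (vW := vW) hδ2 hμW
  rw [Config.FB_eq_blackUnion] at hJB
  rw [Config.FW_eq_innerWhiteUnion] at hJW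
  obtain ⟨x, hx, rfl⟩ := hJB
  obtain ⟨y, hy, rfl⟩ := hJW
  obtain ⟨s, t, hB, hxB⟩ := S.exists_component hP.black hx
  obtain ⟨u, v, hW, hyW⟩ := S.exists_innerWhite_component hQ.white hy
  rw [hB.connectedComponentIn_eq hxB, hW.connectedComponentIn_eq hyW]
  exact trichotomy_of_subset_or_subset ⟨x, hxB⟩ ⟨y, hyW⟩
    (S.Ioo_ne_Ioo hP.black hQ.white hB hW) (S.subset_or_subset_innerWhite hP hQ hB hW)

/-- If `J_B` is a connected component of `F_B` and `J_W` a connected component of `F_W`,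
then exactly one of the following holds: `J_B ∩ J_W = ∅`, or `J_B ⊆ J_W`, or `J_W ⊆ J_B`. -/
theorem component_trichotomy
    (δ : ℝ) (hδ1 : 1 / 4 < δ) (hδ2 : δ < 1 / 2)
    (C : Config) (hlast : IsGreatest (range C.b) 1)
    (hctr : IsCounterexample δ C)
    (hmin : ∀ C' : Config, C'.r < C.r → ¬ IsCounterexample δ C')
    (vB vW : ℝ)
    (hvB : IsGreatest {v : ℝ | IsBlack C δ v ∧ v ≤ 1 / 2 ∧ 1 - v ≤ omegaMax C δ v} vB)
    (hvW : IsLeast {v : ℝ | IsWhite C δ v ∧ 1 / 2 ≤ v ∧ v ≤ omegaMax C δ v} vW)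
    (μ : ℝ → ℝ)
    (hμB : ∀ v : ℝ, IsBlack C δ v → 0 < μ v ∧
      ∀ ω > 0, relMeasure C.carrier v ω ≤ relMeasure C.carrier v (μ v))
    (hμW : ∀ v : ℝ, IsWhite C δ v → 0 < μ v ∧
      ∀ ω > 0, relMeasure C.carrier v (μ v) ≤ relMeasure C.carrier v ω)
    (hF : (Fpts C vB vW).Nonempty)
    (JB JW : Set ℝ)
    (hJB : ∃ x ∈ FB C δ μ vB vW, JB = connectedComponentIn (FB C δ μ vB vW) x)
    (hJW : ∃ x ∈ FW C δ μ vB vW, JW = connectedComponentIn (FW C δ μ vB vW) x) :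
    (JB ∩ JW = ∅ ∧ ¬ JB ⊆ JW ∧ ¬ JW ⊆ JB) ∨
    (JB ∩ JW ≠ ∅ ∧ JB ⊆ JW ∧ ¬ JW ⊆ JB) ∨
    (JB ∩ JW ≠ ∅ ∧ ¬ JB ⊆ JW ∧ JW ⊆ JB) := by
  exact component_trichotomy_general δ hδ2 C hlast hctr hmin vB vW hvB hvW μ hμB hμW JB JW hJB hJW
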